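/- arXiv:0901.3304 — 3 statements merged into one kernel-verified Lean document; each statement's English description precedes it below -/
import Mathlib

section
/- Almost surely, the algebraic difference C_2 − C_1 = {y − x : x ∈ C_1, y ∈ C_2} contains a nonempty open interval. -/
open MeasureTheory ProbabilityTheory

/-- Words over the alphabet `{1,2}` (represented as `Fin 2`), indexing the nodes of the
binary tree of the construction.  A word `i :: w` is a child of the word `w`. -/
abbrev LarssonWord := List (Fin 2)

/-- The left endpoint of the level-`w.length` interval of Larsson's random Cantor set
indexed by the word `w`, given the family `u` of (realized) uniform random variables.
The level-0 interval is `[0,1]`; if `I_w = [α, α + a^n]` is a level-`n` interval, its two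
level-`(n+1)` subintervals are `[α + a^n (b + U), α + a^n (b + U) + a^(n+1)]` and
`[α + a^n (1/2 + a/2 + U'), α + a^n (1/2 + a/2 + U') + a^(n+1)]`. -/
noncomputable def larssonLeft (a b : ℝ) (u : LarssonWord → ℝ) : LarssonWord → ℝ
  | [] => 0
  | (i :: w) => larssonLeft a b u w +
      a ^ w.length * ((if i = 0 then b else 1 / 2 + a / 2) + u (i :: w))

/-- `C^n`: the union of the `2^n` level-`n` intervals. -/
noncomputable def larssonLevel (a b : ℝ) (u : LarssonWord → ℝ) (n : ℕ) : Set ℝ :=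
  ⋃ w ∈ {w : LarssonWord | w.length = n},
    Set.Icc (larssonLeft a b u w) (larssonLeft a b u w + a ^ n)

/-- Larsson's random Cantor set `C = ⋂ n, C^n`. -/
noncomputable def larssonCantor (a b : ℝ) (u : LarssonWord → ℝ) : Set ℝ :=
  ⋂ n : ℕ, larssonLevel a b u n

open scoped ENNReal


noncomputable def larC (a b : ℝ) (i : Fin 2) : ℝ := if i = 0 then b else 1 / 2 + a / 2

noncomputable def larNu (t : ℝ) : Measure ℝ :=
  (ENNReal.ofReal t)⁻¹ • volume.restrict (Set.Icc 0 t)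

noncomputable def larTri (t x : ℝ) : ℝ := max 0 (min t (t - x) - max 0 (-x)) / t ^ 2

lemma larNu_prob {t : ℝ} (ht : 0 < t) : IsProbabilityMeasure (larNu t) := by
  constructor
  simp only [larNu, Measure.smul_apply, Measure.restrict_apply MeasurableSet.univ, Set.univ_inter,
    Real.volume_Icc, sub_zero, smul_eq_mul]
  exact ENNReal.inv_mul_cancel (by simpa using ht) ENNReal.ofReal_ne_top

lemma larTri_lintegral {t : ℝ} (ht : 0 < t) (φ : ℝ → ℝ≥0∞) (hφ : Measurable φ) :
    ∫⁻ x, ∫⁻ y, φ (y - x) ∂(larNu t) ∂(larNu t) = ∫⁻ z, ENNReal.ofReal (larTri t z) * φ z := by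
  have h1 : ∀ x : ℝ, ∫⁻ y, φ (y - x) ∂(larNu t) = (ENNReal.ofReal t)⁻¹ *
      ∫⁻ z, (Set.Icc 0 t).indicator (fun _ => (1 : ℝ≥0∞)) (z + x) * φ z := by
    intro x
    rw [larNu, lintegral_smul_measure, ← lintegral_indicator measurableSet_Icc, smul_eq_mul]
    congr 1
    rw [← lintegral_add_right_eq_self _ x]
    congr 1
    ext z
    by_cases hz : z + x ∈ Set.Icc 0 t <;> simp [Set.indicator, hz]
  have hm : Measurable (fun p : ℝ × ℝ =>
      (Set.Icc 0 t).indicator (fun _ => (1 : ℝ≥0∞)) (p.2 + p.1) * φ p.2) := by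
    refine Measurable.mul ?_ (hφ.comp measurable_snd)
    exact (measurable_const.indicator measurableSet_Icc).comp (measurable_snd.add measurable_fst)
  simp_rw [h1]
  rw [larNu, lintegral_smul_measure, lintegral_const_mul _ hm.lintegral_prod_right',
    lintegral_lintegral_swap hm.aemeasurable, smul_eq_mul, ← mul_assoc,
    ← lintegral_const_mul _ hm.lintegral_prod_left']
  congr 1
  ext z
  have h2 : ∫⁻ x in Set.Icc 0 t, (Set.Icc 0 t).indicator (fun _ => (1 : ℝ≥0∞)) (z + x) * φ z
      = ENNReal.ofReal (max 0 (min t (t - z) - max 0 (-z))) * φ z := by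
    rw [lintegral_mul_const]
    · congr 1
      have : ∀ x : ℝ, (Set.Icc 0 t).indicator (fun _ => (1 : ℝ≥0∞)) (z + x)
          = (Set.Icc (-z) (t - z)).indicator (fun _ => (1 : ℝ≥0∞)) x := by
        intro x
        have : z + x ∈ Set.Icc 0 t ↔ x ∈ Set.Icc (-z) (t - z) := by
          simp only [Set.mem_Icc]; constructor <;> rintro ⟨_, _⟩ <;> constructor <;> linarith
        by_cases hx : x ∈ Set.Icc (-z) (t - z)
        · rw [Set.indicator_of_mem hx, Set.indicator_of_mem (this.2 hx)]
        · rw [Set.indicator_of_notMem hx, Set.indicator_of_notMem (fun h => hx (this.1 h))]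
      simp_rw [this]
      rw [lintegral_indicator measurableSet_Icc, lintegral_const, one_mul,
        Measure.restrict_restrict measurableSet_Icc, Set.Icc_inter_Icc,
        Measure.restrict_apply MeasurableSet.univ, Set.univ_inter, Real.volume_Icc]
      rw [sup_comm, inf_comm]
      simp [ENNReal.ofReal_max]
    · exact (measurable_const.indicator measurableSet_Icc).comp (measurable_const.add measurable_id)
  simp only at h2 ⊢
  rw [h2, ← mul_assoc, larTri, ENNReal.ofReal_div_of_pos (by positivity), ENNReal.ofReal_pow ht.le,
    div_eq_mul_inv, ENNReal.inv_pow, sq, mul_comm (ENNReal.ofReal (max _ _))]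

lemma larTri_nonneg (t x : ℝ) : 0 ≤ larTri t x := by unfold larTri; positivity

lemma larTri_supp {t x : ℝ} (h : t ≤ |x|) : larTri t x = 0 := by
  unfold larTri
  rw [max_eq_left, zero_div]
  rcases abs_cases x with ⟨h1, h2⟩ | ⟨h1, h2⟩
  · have := min_le_right t (t - x); have := le_max_left 0 (-x); linarith
  · have := min_le_left t (t - x); have := le_max_right 0 (-x); linarith

lemma larTri_lip {t : ℝ} (ht : 0 < t) (x y : ℝ) :
    |larTri t x - larTri t y| ≤ (2 / t ^ 2) * |x - y| := by
  unfold larTri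
  rw [← sub_div, abs_div, abs_of_pos (show 0 < t ^ 2 by positivity), div_mul_eq_mul_div]
  gcongr
  refine (abs_max_sub_max_le_max _ _ _ _).trans ?_
  have h1 : |min t (t - x) - min t (t - y)| ≤ |x - y| := by
    refine (abs_min_sub_min_le_max _ _ _ _).trans ?_
    rw [show t - x - (t - y) = -(x - y) by ring, abs_neg]
    simp
  have h2 : |max 0 (-x) - max 0 (-y)| ≤ |x - y| := by
    refine (abs_max_sub_max_le_max _ _ _ _).trans ?_
    rw [show -x - -y = -(x - y) by ring, abs_neg]
    simp
  refine max_le (by simp) ?_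
  rw [abs_le] at *
  constructor <;> linarith

lemma larTri_le {t : ℝ} (ht : 0 < t) (x : ℝ) : larTri t x ≤ 1 / t := by
  unfold larTri
  rw [div_le_div_iff₀ (by positivity) ht, one_mul]
  have : max 0 (min t (t - x) - max 0 (-x)) ≤ t := by
    refine max_le ht.le ?_
    have := min_le_left t (t - x); have := le_max_left 0 (-x); linarith
  nlinarith

noncomputable def larKap (a b t x : ℝ) : ℝ :=
  (1 / 4) * ∑ i, ∑ j, larTri t (x - (larC a b j - larC a b i))

lemma larKap_nonneg (a b t x : ℝ) : 0 ≤ larKap a b t x := by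
  unfold larKap
  have := larTri_nonneg t
  have : 0 ≤ ∑ i, ∑ j, larTri t (x - (larC a b j - larC a b i)) :=
    Finset.sum_nonneg fun i _ => Finset.sum_nonneg fun j _ => this _
  positivity

lemma larKap_lip {a b t : ℝ} (ht : 0 < t) (x y : ℝ) :
    |larKap a b t x - larKap a b t y| ≤ (2 / t ^ 2) * |x - y| := by
  unfold larKap
  rw [← mul_sub, ← Finset.sum_sub_distrib]
  simp_rw [← Finset.sum_sub_distrib]
  rw [abs_mul, abs_of_pos (by norm_num : (0:ℝ) < 1 / 4)]
  have : |∑ i : Fin 2, ∑ j : Fin 2, (larTri t (x - (larC a b j - larC a b i)) -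
      larTri t (y - (larC a b j - larC a b i)))| ≤ ∑ i : Fin 2, ∑ j : Fin 2, (2 / t ^ 2) * |x - y| := by
    refine (Finset.abs_sum_le_sum_abs _ _).trans (Finset.sum_le_sum fun i _ => ?_)
    refine (Finset.abs_sum_le_sum_abs _ _).trans (Finset.sum_le_sum fun j _ => ?_)
    refine (larTri_lip ht _ _).trans (le_of_eq ?_)
    ring_nf
  simp only [Finset.sum_const, Finset.card_univ, Fintype.card_fin, nsmul_eq_mul] at this
  push_cast at this
  linarith

lemma larKap_le {a b t : ℝ} (ht : 0 < t) (x : ℝ) : larKap a b t x ≤ 1 / t := by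
  unfold larKap
  have : ∑ i : Fin 2, ∑ j : Fin 2, larTri t (x - (larC a b j - larC a b i)) ≤
      ∑ i : Fin 2, ∑ j : Fin 2, 1 / t :=
    Finset.sum_le_sum fun i _ => Finset.sum_le_sum fun j _ => larTri_le ht _
  simp at this
  simp
  linarith

lemma larKap_cont {a b t : ℝ} : Continuous (larKap a b t) := by
  unfold larKap larTri
  fun_prop

/-- bounds on the centre differences -/
lemma larC_bound {a b t : ℝ} (ha : 0 < a) (hb : 0 < b) (hab : 3 * a + 2 * b < 1)
    (ht : t = (1 - 3 * a - 2 * b) / 2) (i j : Fin 2) :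
    |larC a b j - larC a b i| ≤ 1 - a - 2 * b - t := by
  fin_cases i <;> fin_cases j <;> simp [larC] <;> (try rw [abs_le]) <;>
    (try constructor) <;> linarith

lemma larKap_supp {a b t : ℝ} (ha : 0 < a) (hb : 0 < b) (hab : 3 * a + 2 * b < 1)
    (ht : t = (1 - 3 * a - 2 * b) / 2) {x : ℝ} (hx : 1 - a < |x|) : larKap a b t x = 0 := by
  unfold larKap
  rw [Finset.sum_eq_zero, mul_zero]
  intro i _
  refine Finset.sum_eq_zero fun j _ => larTri_supp ?_
  have := larC_bound ha hb hab ht i j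
  have := abs_sub_abs_le_abs_sub x (larC a b j - larC a b i)
  linarith

lemma larKap_lintegral {a b t : ℝ} (ht : 0 < t) (φ : ℝ → ℝ≥0∞) (hφ : Measurable φ) :
    ∫⁻ z, ENNReal.ofReal (larKap a b t z) * φ z =
    ENNReal.ofReal (1 / 4) * ∑ i, ∑ j, ∫⁻ x, ∫⁻ y, φ (larC a b j + y - larC a b i - x) ∂(larNu t) ∂(larNu t) := by
  have hT : Measurable (larTri t) := by unfold larTri; fun_prop
  have h1 : ∀ i j, ∫⁻ x, ∫⁻ y, φ (larC a b j + y - larC a b i - x) ∂(larNu t) ∂(larNu t)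
      = ∫⁻ z, ENNReal.ofReal (larTri t (z - (larC a b j - larC a b i))) * φ z := by
    intro i j
    have := larTri_lintegral ht (fun z => φ (z + (larC a b j - larC a b i))) (by fun_prop)
    rw [← lintegral_add_right_eq_self (μ := volume) _ (larC a b j - larC a b i)]
    simp only [add_sub_cancel_right]
    rw [← this]
    congr! 5
    ring
  simp_rw [h1]
  have h2 : ∀ z, ENNReal.ofReal (larKap a b t z) * φ z = ENNReal.ofReal (1 / 4) *
      ∑ i, ∑ j, ENNReal.ofReal (larTri t (z - (larC a b j - larC a b i))) * φ z := by
    intro z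
    rw [larKap, ENNReal.ofReal_mul (by norm_num), ENNReal.ofReal_sum_of_nonneg, mul_assoc,
      Finset.sum_mul]
    · congr 1
      refine Finset.sum_congr rfl fun i _ => ?_
      rw [ENNReal.ofReal_sum_of_nonneg (fun j _ => larTri_nonneg _ _), Finset.sum_mul]
    · exact fun i _ => Finset.sum_nonneg fun j _ => larTri_nonneg _ _
  simp_rw [h2]
  rw [lintegral_const_mul _ (by fun_prop), lintegral_finsetSum _ (by fun_prop)]
  congr 1
  refine Finset.sum_congr rfl fun i _ => ?_
  rw [lintegral_finsetSum _ (by fun_prop)]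

noncomputable def larDel (a b t : ℝ) : Measure ℝ :=
  volume.withDensity fun z => ENNReal.ofReal (larKap a b t z)

lemma larDel_lintegral {a b t : ℝ} (φ : ℝ → ℝ≥0∞) (hφ : Measurable φ) :
    ∫⁻ z, φ z ∂(larDel a b t) = ∫⁻ z, ENNReal.ofReal (larKap a b t z) * φ z := by
  rw [larDel, lintegral_withDensity_eq_lintegral_mul _ _ hφ]
  · rfl
  · exact (larKap_cont.measurable).ennreal_ofReal

lemma larDel_prob {a b t : ℝ} (ht : 0 < t) : IsProbabilityMeasure (larDel a b t) := by
  constructor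
  have := larNu_prob ht
  rw [← lintegral_one, larDel_lintegral _ measurable_const, larKap_lintegral ht _ measurable_const]
  simp
  norm_num
  exact ENNReal.inv_mul_cancel (by norm_num) (by norm_num)


lemma lar_shift (δ : Measure ℝ) [IsProbabilityMeasure δ] :
    (Measure.infinitePi (fun _ : ℕ => δ)).map (fun ω : ℕ → ℝ => (ω 0, fun n => ω (n + 1))) =
      δ.prod (Measure.infinitePi (fun _ : ℕ => δ)) := by
  have hm : Measurable (fun p : ℝ × (ℕ → ℝ) => fun n : ℕ => Nat.casesOn (motive := fun _ => ℝ) n p.1 (fun k => p.2 k)) := by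
    refine measurable_pi_lambda _ fun n => ?_
    cases n with
    | zero => exact measurable_fst
    | succ k => exact (measurable_pi_apply k).comp measurable_snd
  have hs : Measurable (fun ω : ℕ → ℝ => (ω 0, fun n => ω (n + 1))) := by fun_prop
  have key : (δ.prod (Measure.infinitePi (fun _ : ℕ => δ))).map
      (fun p : ℝ × (ℕ → ℝ) => fun n : ℕ => Nat.casesOn (motive := fun _ => ℝ) n p.1 (fun k => p.2 k))
      = Measure.infinitePi (fun _ : ℕ => δ) := by
    refine Measure.eq_infinitePi _ fun s t ht => ?_
    rw [Measure.map_apply hm (MeasurableSet.pi s.countable_toSet fun i _ => ht i)]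
    classical
    set t' : ℕ → Set ℝ := fun i => if i ∈ s then t i else Set.univ with ht'
    have ht'm : ∀ i, MeasurableSet (t' i) := by
      intro i; simp only [ht']; split_ifs; exacts [ht i, MeasurableSet.univ]
    obtain ⟨N, hN⟩ : ∃ N, ∀ i ∈ s, i < N + 1 := by
      obtain ⟨N, hN⟩ := s.exists_nat_subset_range
      exact ⟨N, fun i hi => by have := Finset.mem_range.1 (hN hi); omega⟩
    have hset : (fun p : ℝ × (ℕ → ℝ) => fun n : ℕ => Nat.casesOn (motive := fun _ => ℝ) n p.1 (fun k => p.2 k)) ⁻¹'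
        (Set.pi (s : Set ℕ) t) = (t' 0) ×ˢ (Set.pi (Finset.range N : Set ℕ) (fun k => t' (k + 1))) := by
      ext p
      simp only [Set.mem_preimage, Set.mem_pi, Set.mem_prod, Finset.mem_coe, Finset.mem_range, ht']
      constructor
      · intro h
        refine ⟨?_, fun k _ => ?_⟩
        · split_ifs with h0
          · exact h 0 h0
          · trivial
        · split_ifs with h0
          · exact h (k + 1) h0
          · trivial
      · rintro ⟨h0, h1⟩ i hi
        cases i with
        | zero => simpa [hi] using h0
        | succ k =>
          have := h1 k (by have := hN _ hi; omega)
          simpa [hi] using this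
    rw [hset, Measure.prod_prod, Measure.infinitePi_pi _ (fun i _ => ht'm _)]
    have : ∏ i ∈ Finset.range (N + 1), δ (t' i) = ∏ i ∈ s, δ (t i) := by
      have hsub : s ⊆ Finset.range (N + 1) := fun i hi => Finset.mem_range.2 (hN i hi)
      rw [← Finset.prod_subset hsub]
      · exact Finset.prod_congr rfl fun i hi => by simp [ht', hi]
      · intro i _ hi; simp [ht', hi]
    rw [← this, Finset.prod_range_succ', mul_comm]
  conv_lhs => rw [← key]
  rw [Measure.map_map hs hm]
  exact Measure.map_id

lemma lar_sigma (δ : Measure ℝ) [IsProbabilityMeasure δ] {a : ℝ} (ha : 0 < a) (ha1 : a < 1)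
    (hδ : ∀ᵐ x ∂δ, |x| ≤ 1 - a) :
    ∃ σ : Measure ℝ, IsProbabilityMeasure σ ∧ (∀ᵐ z ∂σ, |z| ≤ 1) ∧
      ∀ φ : ℝ → ℝ≥0∞, Measurable φ → ∫⁻ z, φ z ∂σ = ∫⁻ z, ∫⁻ x, φ (x + a * z) ∂δ ∂σ := by
  set Q := Measure.infinitePi (fun _ : ℕ => δ) with hQ
  set Z : (ℕ → ℝ) → ℝ := fun ω => ∑' k, a ^ k * ω k with hZ
  have hZm : Measurable Z := by
    have : ∀ k : ℕ, Measurable (fun ω : ℕ → ℝ => a ^ k * ω k) := fun k => by fun_prop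
    exact Measurable.tsum this
  have hall : ∀ᵐ ω ∂Q, ∀ k, |ω k| ≤ 1 - a := by
    rw [ae_all_iff]
    intro k
    have hk : Q.map (fun ω => ω k) = δ := Measure.infinitePi_map_eval (fun _ : ℕ => δ) k
    rw [← hk] at hδ
    exact ae_of_ae_map (measurable_pi_apply k).aemeasurable hδ
  have hgeo : Summable fun k : ℕ => a ^ k * (1 - a) := (summable_geometric_of_lt_one ha.le ha1).mul_right _
  have hsum : ∀ ω : ℕ → ℝ, (∀ k, |ω k| ≤ 1 - a) → Summable (fun k => a ^ k * ω k) := by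
    intro ω hω
    refine Summable.of_norm_bounded hgeo fun k => ?_
    rw [Real.norm_eq_abs, abs_mul, abs_of_pos (pow_pos ha k)]
    exact mul_le_mul_of_nonneg_left (hω k) (pow_pos ha k).le
  refine ⟨Q.map Z, Measure.isProbabilityMeasure_map hZm.aemeasurable, ?_, ?_⟩
  · rw [ae_map_iff hZm.aemeasurable (measurableSet_le (by fun_prop) (by fun_prop))]
    filter_upwards [hall] with ω hω
    have h1 : ‖Z ω‖ ≤ ∑' k : ℕ, a ^ k * (1 - a) := by
      refine tsum_of_norm_bounded hgeo.hasSum fun k => ?_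
      rw [Real.norm_eq_abs, abs_mul, abs_of_pos (pow_pos ha k)]
      exact mul_le_mul_of_nonneg_left (hω k) (pow_pos ha k).le
    rw [tsum_mul_right, tsum_geometric_of_lt_one ha.le ha1,
      inv_mul_cancel₀ (by linarith)] at h1
    exact h1
  · intro φ hφ
    rw [lintegral_map hφ hZm, lintegral_map (f := fun z => ∫⁻ x, φ (x + a * z) ∂δ) ?_ hZm]
    swap
    · exact Measurable.lintegral_prod_left' (f := fun p : ℝ × ℝ => φ (p.1 + a * p.2)) (by fun_prop)
    have h1 : ∀ᵐ ω ∂Q, φ (Z ω) = φ (ω 0 + a * Z (fun n => ω (n + 1))) := by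
      filter_upwards [hall] with ω hω
      congr 1
      simp only [hZ]
      rw [(hsum ω hω).tsum_eq_zero_add, pow_zero, one_mul, ← tsum_mul_left]
      congr 2
      ext k; ring
    rw [lintegral_congr_ae h1]
    have h2 : ∫⁻ ω, φ (ω 0 + a * Z (fun n => ω (n + 1))) ∂Q =
        ∫⁻ p, φ (p.1 + a * Z p.2) ∂(Q.map (fun ω : ℕ → ℝ => (ω 0, fun n => ω (n + 1)))) := by
      rw [lintegral_map (by fun_prop) (by fun_prop)]
    rw [h2, hQ, lar_shift, lintegral_prod_symm _ (by fun_prop)]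

theorem lar_exists_h {a b t : ℝ} (ha : 0 < a) (hb : 0 < b) (hab : 3 * a + 2 * b < 1)
    (ht : t = (1 - 3 * a - 2 * b) / 2) :
    ∃ h : ℝ → ℝ, (∀ x, 0 ≤ h x) ∧ (∀ x, h x ≤ 1 / t) ∧ (∀ x, 1 < |x| → h x = 0) ∧
      (∀ x y, |h x - h y| ≤ (2 / t ^ 2) * |x - y|) ∧ (∫⁻ x, ENNReal.ofReal (h x) = 1) ∧
      ∀ e, ENNReal.ofReal (h e) = ENNReal.ofReal (1 / (4 * a)) * ∑ i, ∑ j,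
        ∫⁻ x, ∫⁻ y, ENNReal.ofReal (h ((e - (larC a b j + y - larC a b i - x)) / a))
          ∂(larNu t) ∂(larNu t) := by
  have ht0 : 0 < t := by rw [ht]; linarith
  have ha1 : a < 1 := by linarith
  have := larDel_prob (a := a) (b := b) ht0
  have hδ : ∀ᵐ x ∂(larDel a b t), |x| ≤ 1 - a := by
    rw [larDel, ae_withDensity_iff (larKap_cont.measurable).ennreal_ofReal]
    refine Filter.Eventually.of_forall fun x hx => ?_
    by_contra hc
    push Not at hc
    rw [larKap_supp ha hb hab ht hc] at hx
    simp at hx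
  obtain ⟨σ, hσ, hσ1, hσφ⟩ := lar_sigma (larDel a b t) ha ha1 hδ
  have hκc : Continuous (larKap a b t) := larKap_cont
  have hint : ∀ e, Integrable (fun z => larKap a b t (e - a * z)) σ := by
    intro e
    refine Integrable.of_bound (by fun_prop) (1 / t) (Filter.Eventually.of_forall fun z => ?_)
    rw [Real.norm_of_nonneg (larKap_nonneg _ _ _ _)]
    exact larKap_le ht0 _
  have hE : ∀ e, ENNReal.ofReal (∫ z, larKap a b t (e - a * z) ∂σ) =
      ∫⁻ z, ENNReal.ofReal (larKap a b t (e - a * z)) ∂σ := by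
    intro e
    exact ofReal_integral_eq_lintegral_ofReal (hint e)
      (Filter.Eventually.of_forall fun z => larKap_nonneg _ _ _ _)
  have hlip : ∀ x y, |(∫ z, larKap a b t (x - a * z) ∂σ) - ∫ z, larKap a b t (y - a * z) ∂σ|
      ≤ (2 / t ^ 2) * |x - y| := by
    intro x y
    rw [← integral_sub (hint x) (hint y), ← Real.norm_eq_abs]
    have := norm_integral_le_of_norm_le_const (μ := σ) (C := (2 / t ^ 2) * |x - y|)
      (f := fun z => larKap a b t (x - a * z) - larKap a b t (y - a * z))
      (Filter.Eventually.of_forall fun z => by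
        rw [Real.norm_eq_abs]
        refine (larKap_lip ht0 _ _).trans (le_of_eq ?_)
        congr 2; ring)
    simpa using this
  have hcont : Continuous (fun x => ∫ z, larKap a b t (x - a * z) ∂σ) := by
    have : LipschitzWith (Real.toNNReal (2 / t ^ 2)) (fun x => ∫ z, larKap a b t (x - a * z) ∂σ) := by
      refine LipschitzWith.of_dist_le_mul fun x y => ?_
      rw [Real.dist_eq, Real.dist_eq, Real.coe_toNNReal _ (by positivity)]
      exact hlip x y
    exact this.continuous
  refine ⟨fun e => ∫ z, larKap a b t (e - a * z) ∂σ, fun x => integral_nonneg fun z => larKap_nonneg _ _ _ _,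
    ?_, ?_, hlip, ?_, ?_⟩
  · intro x
    have := integral_mono (hint x) (integrable_const (1 / t)) (fun z => larKap_le ht0 _)
    simpa using this
  · intro x hx
    refine integral_eq_zero_of_ae ?_
    filter_upwards [hσ1] with z hz
    refine larKap_supp ha hb hab ht ?_
    have h1 := abs_sub_abs_le_abs_sub x (a * z)
    rw [abs_mul, abs_of_pos ha] at h1
    nlinarith
  · simp_rw [hE]
    rw [lintegral_lintegral_swap (by fun_prop)]
    have : ∀ z, ∫⁻ x, ENNReal.ofReal (larKap a b t (x - a * z)) = 1 := by
      intro z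
      rw [lintegral_sub_right_eq_self (fun x => ENNReal.ofReal (larKap a b t x))]
      have := (larDel_prob (a := a) (b := b) ht0).measure_univ
      rw [← lintegral_one, larDel_lintegral _ measurable_const] at this
      simpa using this
    simp [this]
  · intro e
    have h1 := hσφ (fun z => ENNReal.ofReal (larKap a b t (e - a * z))) (by fun_prop)
    rw [hE, h1]
    have h2 : ∀ z, ∫⁻ x, ENNReal.ofReal (larKap a b t (e - a * (x + a * z))) ∂(larDel a b t)
        = ∫⁻ y, ENNReal.ofReal (larKap a b t (y - a * z)) * ENNReal.ofReal (larKap a b t (e - a * y)) := by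
      intro z
      rw [larDel_lintegral _ (by fun_prop)]
      rw [← lintegral_add_right_eq_self (μ := volume) (fun y => ENNReal.ofReal (larKap a b t (y - a * z)) *
        ENNReal.ofReal (larKap a b t (e - a * y))) (a * z)]
      simp
    simp_rw [h2]
    rw [lintegral_lintegral_swap (by fun_prop)]
    have h3 : ∀ y, ∫⁻ z, ENNReal.ofReal (larKap a b t (y - a * z)) * ENNReal.ofReal (larKap a b t (e - a * y)) ∂σ
        = ENNReal.ofReal (∫ z, larKap a b t (y - a * z) ∂σ) * ENNReal.ofReal (larKap a b t (e - a * y)) := by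
      intro y
      rw [lintegral_mul_const _ (by fun_prop), hE]
    simp_rw [h3]
    set h := fun e => ∫ z, larKap a b t (e - a * z) ∂σ with hh
    have h4 := larKap_lintegral (a := a) (b := b) ht0 (fun D => ENNReal.ofReal (h ((e - D) / a))) (by fun_prop)
    have h5 : ENNReal.ofReal (1 / (4 * a)) = ENNReal.ofReal (1 / a) * ENNReal.ofReal (1 / 4) := by
      rw [← ENNReal.ofReal_mul (by positivity)]; congr 1; field_simp
    rw [h5, mul_assoc, ← h4]
    have h6 := lintegral_sub_left_eq_self (μ := volume) (fun D => ENNReal.ofReal (larKap a b t D) * ENNReal.ofReal (h ((e - D) / a))) e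
    rw [← h6]
    have hhm : Measurable h := hcont.measurable
    have h7 : ∀ g : ℝ → ℝ≥0∞, Measurable g → ∫⁻ y, g (a * y) = ENNReal.ofReal (1 / a) * ∫⁻ D, g D := by
      intro g hg
      have h8 := Real.map_volume_mul_left ha.ne'
      rw [← lintegral_map (μ := volume) (g := fun y => a * y) hg (by fun_prop), h8, lintegral_smul_measure,
        abs_of_pos (inv_pos.2 ha), one_div, smul_eq_mul]
    rw [← h7 _ (by fun_prop)]
    congr 1
    ext y
    rw [sub_sub_cancel, mul_div_cancel_left₀ _ ha.ne', mul_comm]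

def larWords : ℕ → Finset LarssonWord
  | 0 => {[]}
  | n + 1 => ((Finset.univ : Finset (Fin 2)) ×ˢ larWords n).image (fun p => p.1 :: p.2)

lemma mem_larWords {n : ℕ} {w : LarssonWord} : w ∈ larWords n ↔ w.length = n := by
  induction n generalizing w with
  | zero => simp [larWords]
  | succ n ih =>
    cases w with
    | nil => simp [larWords]
    | cons i w => simp [larWords, ih]

lemma sum_larWords_succ (n : ℕ) (g : LarssonWord → ℝ) :
    ∑ w ∈ larWords (n + 1), g w = ∑ w ∈ larWords n, ∑ i, g (i :: w) := by
  rw [larWords, Finset.sum_image (by rintro ⟨i, w⟩ _ ⟨j, v⟩ _ h; simpa using h),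
    Finset.sum_product_right]

lemma card_larWords (n : ℕ) : (larWords n).card = 2 ^ n := by
  induction n with
  | zero => simp [larWords]
  | succ n ih =>
    rw [larWords, Finset.card_image_of_injective _ (by rintro ⟨i, w⟩ ⟨j, v⟩ h; simpa using h),
      Finset.card_product, ih]
    simp [pow_succ, mul_comm]

lemma larLeft_cons (a b : ℝ) (u : LarssonWord → ℝ) (i : Fin 2) (w : LarssonWord) :
    larssonLeft a b u (i :: w) = larssonLeft a b u w + a ^ w.length * (larC a b i + u (i :: w)) := rfl

lemma larC_range {a b t : ℝ} (ha : 0 < a) (hab : 3 * a + 2 * b < 1)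
    (ht : t = (1 - 3 * a - 2 * b) / 2) (i : Fin 2) : b ≤ larC a b i ∧ larC a b i ≤ 1 - a - b - t := by
  fin_cases i <;> simp [larC] <;> (try constructor) <;> linarith

section det
variable {a b t : ℝ}

lemma larLeft_child (ha : 0 < a) (hab : 3 * a + 2 * b < 1)
    (ht : t = (1 - 3 * a - 2 * b) / 2) {u : LarssonWord → ℝ} (hu : ∀ w, u w ∈ Set.Icc 0 t)
    (i : Fin 2) (w : LarssonWord) :
    larssonLeft a b u w + a ^ w.length * b ≤ larssonLeft a b u (i :: w) ∧
    larssonLeft a b u (i :: w) ≤ larssonLeft a b u w + a ^ w.length * (1 - a - b) := by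
  rw [larLeft_cons]
  have h1 := larC_range ha hab ht i
  have h2 := hu (i :: w)
  have h3 : 0 < a ^ w.length := pow_pos ha _
  refine ⟨by gcongr; linarith [h2.1], ?_⟩
  gcongr
  linarith [h2.2]

lemma larLeft_range (ha : 0 < a) (hb : 0 < b) (hab : 3 * a + 2 * b < 1)
    (ht : t = (1 - 3 * a - 2 * b) / 2) {u : LarssonWord → ℝ} (hu : ∀ w, u w ∈ Set.Icc 0 t)
    (w : LarssonWord) :
    0 ≤ larssonLeft a b u w ∧ larssonLeft a b u w + a ^ w.length ≤ 1 := by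
  induction w with
  | nil => simp [larssonLeft]
  | cons i w ih =>
    have h := larLeft_child ha hab ht hu i w
    have h3 : 0 < a ^ w.length := pow_pos ha _
    have h4 : 0 < a ^ w.length * b := by positivity
    rw [List.length_cons, pow_succ]
    constructor
    · linarith
    · nlinarith

lemma larLeft_sep (ha : 0 < a) (hb : 0 < b) (hab : 3 * a + 2 * b < 1)
    (ht : t = (1 - 3 * a - 2 * b) / 2) {u : LarssonWord → ℝ} (hu : ∀ w, u w ∈ Set.Icc 0 t)
    (n : ℕ) (w v : LarssonWord) (hw : w.length = n) (hv : v.length = n) (hwv : w ≠ v) :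
    2 * a ^ n ≤ |larssonLeft a b u w - larssonLeft a b u v| := by
  induction n generalizing w v with
  | zero =>
    rw [List.length_eq_zero_iff] at hw hv
    exact absurd (hw.trans hv.symm) hwv
  | succ n ih =>
    obtain ⟨i, w, rfl⟩ := List.exists_cons_of_length_eq_add_one hw
    obtain ⟨j, v, rfl⟩ := List.exists_cons_of_length_eq_add_one hv
    simp only [List.length_cons, add_left_inj] at hw hv
    have hp : 0 < a ^ n := pow_pos ha _
    by_cases h : w = v
    · subst h
      have hij : i ≠ j := fun h => hwv (by rw [h])
      rw [larLeft_cons, larLeft_cons, hw, add_sub_add_left_eq_sub, ← mul_sub, abs_mul, abs_of_pos hp,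
        pow_succ, ← mul_assoc, mul_comm 2, mul_assoc]
      refine mul_le_mul_of_nonneg_left ?_ hp.le
      have h1 := hu (i :: w)
      have h2 := hu (j :: w)
      rcases h1 with ⟨h11, h12⟩
      rcases h2 with ⟨h21, h22⟩
      rw [le_abs]
      fin_cases i <;> fin_cases j <;> simp at hij <;> simp [larC] at * <;>
        first | (left; linarith) | (right; linarith)
    · have h0 := ih w v hw hv h
      have h1 := larLeft_child ha hab ht hu i w
      have h2 := larLeft_child ha hab ht hu j v
      rw [hw] at h1
      rw [hv] at h2
      rw [pow_succ]
      rw [le_abs] at h0 ⊢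
      have : 0 < a ^ n * a := by positivity
      have : 0 < a ^ n * b := by positivity
      rcases h0 with h0 | h0
      · left; nlinarith
      · right; nlinarith

lemma larLevel_anti (ha : 0 < a) (hb : 0 < b) (hab : 3 * a + 2 * b < 1)
    (ht : t = (1 - 3 * a - 2 * b) / 2) {u : LarssonWord → ℝ} (hu : ∀ w, u w ∈ Set.Icc 0 t) (n : ℕ) :
    larssonLevel a b u (n + 1) ⊆ larssonLevel a b u n := by
  intro x hx
  simp only [larssonLevel, Set.mem_iUnion, Set.mem_setOf_eq, exists_prop] at hx ⊢
  obtain ⟨w, hw, hx⟩ := hx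
  obtain ⟨i, w, rfl⟩ := List.exists_cons_of_length_eq_add_one hw
  simp only [List.length_cons, add_left_inj] at hw
  refine ⟨w, hw, ?_⟩
  have h1 := larLeft_child ha hab ht hu i w
  rw [hw] at h1
  have hp : 0 < a ^ n := pow_pos ha _
  rw [pow_succ] at hx
  have : 0 < a ^ n * b := by positivity
  constructor
  · linarith [hx.1]
  · nlinarith [hx.2]

lemma larLevel_compact (u : LarssonWord → ℝ) (n : ℕ) : IsCompact (larssonLevel a b u n) := by
  have : {w : LarssonWord | w.length = n} = (larWords n : Set LarssonWord) := by
    ext w; simp [mem_larWords]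
  rw [larssonLevel, this]
  exact (larWords n).finite_toSet.isCompact_biUnion fun w _ => isCompact_Icc

lemma larLeft_congr {u u' : LarssonWord → ℝ} (n : ℕ) (h : ∀ w : LarssonWord, w.length ≤ n → u w = u' w)
    (w : LarssonWord) (hw : w.length ≤ n) : larssonLeft a b u w = larssonLeft a b u' w := by
  induction w with
  | nil => rfl
  | cons i w ih =>
    rw [larLeft_cons, larLeft_cons, ih (by simp at hw; omega), h _ hw]

/-- normalised offset of the line in the square indexed by `(w, v)` -/
noncomputable def larE (a b : ℝ) (u : Bool × LarssonWord → ℝ) (d : ℝ) (n : ℕ) (w v : LarssonWord) : ℝ :=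
  (d - (larssonLeft a b (fun w => u (true, w)) v - larssonLeft a b (fun w => u (false, w)) w)) / a ^ n

noncomputable def larF (h : ℝ → ℝ) (a b : ℝ) (n : ℕ) (u : Bool × LarssonWord → ℝ) (d : ℝ) : ℝ :=
  ((4 * a) ^ n)⁻¹ * ∑ w ∈ larWords n, ∑ v ∈ larWords n, h (larE a b u d n w v)

noncomputable def larXi (h : ℝ → ℝ) (a b e : ℝ) (x y : Fin 2 → ℝ) : ℝ :=
  (1 / (4 * a)) * ∑ i, ∑ j, h ((e - (larC a b j + y j - larC a b i - x i)) / a)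

lemma larE_cons (ha : 0 < a) (u : Bool × LarssonWord → ℝ) (d : ℝ) (n : ℕ) (w v : LarssonWord)
    (hw : w.length = n) (hv : v.length = n) (i j : Fin 2) :
    larE a b u d (n + 1) (i :: w) (j :: v) =
      (larE a b u d n w v - (larC a b j + u (true, j :: v) - larC a b i - u (false, i :: w))) / a := by
  unfold larE
  rw [larLeft_cons, larLeft_cons, hw, hv, pow_succ]
  field_simp
  ring

lemma larF_succ (h : ℝ → ℝ) (ha : 0 < a) (n : ℕ) (u : Bool × LarssonWord → ℝ) (d : ℝ) :
    larF h a b (n + 1) u d = ((4 * a) ^ n)⁻¹ * ∑ w ∈ larWords n, ∑ v ∈ larWords n,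
      larXi h a b (larE a b u d n w v) (fun i => u (false, i :: w)) (fun j => u (true, j :: v)) := by
  unfold larF larXi
  rw [sum_larWords_succ]
  simp_rw [sum_larWords_succ]
  simp_rw [← Finset.mul_sum]
  rw [← mul_assoc, pow_succ, mul_inv, one_div]
  congr 1
  refine Finset.sum_congr rfl fun w hw => ?_
  rw [Finset.sum_comm]
  refine Finset.sum_congr rfl fun v hv => ?_
  refine Finset.sum_congr rfl fun i _ => ?_
  refine Finset.sum_congr rfl fun j _ => ?_
  rw [larE_cons ha u d n w v (mem_larWords.1 hw) (mem_larWords.1 hv)]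

lemma larE_congr {u u' : Bool × LarssonWord → ℝ} (d : ℝ) (n : ℕ)
    (h : ∀ p : Bool × LarssonWord, p.2.length ≤ n → u p = u' p)
    (w v : LarssonWord) (hw : w.length ≤ n) (hv : v.length ≤ n) :
    larE a b u d n w v = larE a b u' d n w v := by
  unfold larE
  rw [larLeft_congr (u := fun w => u (true, w)) (u' := fun w => u' (true, w)) n
    (fun w hw => h (true, w) hw) v hv, larLeft_congr (u := fun w => u (false, w))
    (u' := fun w => u' (false, w)) n (fun w hw => h (false, w) hw) w hw]

lemma larLeft_meas (s : Bool) (w : LarssonWord) :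
    Measurable (fun u : Bool × LarssonWord → ℝ => larssonLeft a b (fun w => u (s, w)) w) := by
  induction w with
  | nil => exact measurable_const
  | cons i w ih =>
    simp_rw [larLeft_cons]
    fun_prop

lemma larE_meas (d : ℝ) (n : ℕ) (w v : LarssonWord) :
    Measurable (fun u : Bool × LarssonWord → ℝ => larE a b u d n w v) := by
  have h1 := larLeft_meas (a := a) (b := b) true v
  have h2 := larLeft_meas (a := a) (b := b) false w
  unfold larE
  fun_prop

lemma larF_meas {h : ℝ → ℝ} (hh : Measurable h) (d : ℝ) (n : ℕ) :
    Measurable (fun u : Bool × LarssonWord → ℝ => larF h a b n u d) := by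
  have := fun w v => larE_meas (a := a) (b := b) d n w v
  unfold larF
  fun_prop

/-- active squares on a line form a matching -/
lemma larE_match (ha : 0 < a) (hb : 0 < b) (hab : 3 * a + 2 * b < 1)
    (ht : t = (1 - 3 * a - 2 * b) / 2) {u : Bool × LarssonWord → ℝ} (hu : ∀ w, u w ∈ Set.Icc 0 t)
    (d : ℝ) (n : ℕ) (w v w' v' : LarssonWord) (hw : w.length = n) (hv : v.length = n)
    (hw' : w'.length = n) (hv' : v'.length = n) (h1 : |larE a b u d n w v| < 1)
    (h2 : |larE a b u d n w' v'| < 1) (hor : w = w' ∨ v = v') : w = w' ∧ v = v' := by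
  have hp : 0 < a ^ n := pow_pos ha _
  unfold larE at h1 h2
  rw [abs_div, abs_of_pos hp, div_lt_one hp, abs_lt] at h1 h2
  rcases hor with rfl | rfl
  · refine ⟨rfl, ?_⟩
    by_contra hne
    have := larLeft_sep ha hb hab ht (fun w => hu (true, w)) n v v' hv hv' hne
    rw [le_abs] at this
    rcases this with h | h <;> linarith [h1.1, h1.2, h2.1, h2.2]
  · refine ⟨?_, rfl⟩
    by_contra hne
    have := larLeft_sep ha hb hab ht (fun w => hu (false, w)) n w w' hw hw' hne
    rw [le_abs] at this
    rcases this with h | h <;> linarith [h1.1, h1.2, h2.1, h2.2]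

lemma larXi_zero (ha : 0 < a) (hb : 0 < b) (hab : 3 * a + 2 * b < 1)
    (ht : t = (1 - 3 * a - 2 * b) / 2) {h : ℝ → ℝ} (hs : ∀ x, 1 < |x| → h x = 0) {e : ℝ} (he : 1 ≤ |e|)
    {x y : Fin 2 → ℝ} (hx : ∀ i, x i ∈ Set.Icc 0 t) (hy : ∀ i, y i ∈ Set.Icc 0 t) :
    larXi h a b e x y = 0 := by
  unfold larXi
  rw [Finset.sum_eq_zero, mul_zero]
  intro i _
  refine Finset.sum_eq_zero fun j _ => hs _ ?_
  rw [abs_div, abs_of_pos ha, one_lt_div ha]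
  have h1 := larC_bound ha hb hab ht i j
  have h2 := hx i
  have h3 := hy j
  rw [abs_le] at h1
  rw [lt_abs]
  rw [le_abs] at he
  rcases he with he | he
  · left; linarith [h2.1, h2.2, h3.1, h3.2, h1.1, h1.2]
  · right; linarith [h2.1, h2.2, h3.1, h3.2, h1.1, h1.2]

lemma larXi_bound (ha : 1 / 4 < a) {h : ℝ → ℝ} {M : ℝ} (h0 : ∀ x, 0 ≤ h x) (hM : ∀ x, h x ≤ M)
    (e : ℝ) (x y : Fin 2 → ℝ) : 0 ≤ larXi h a b e x y ∧ larXi h a b e x y ≤ 4 * M := by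
  unfold larXi
  have h1 : 0 ≤ ∑ i : Fin 2, ∑ j : Fin 2, h ((e - (larC a b j + y j - larC a b i - x i)) / a) :=
    Finset.sum_nonneg fun i _ => Finset.sum_nonneg fun j _ => h0 _
  have h2 : ∑ i : Fin 2, ∑ j : Fin 2, h ((e - (larC a b j + y j - larC a b i - x i)) / a) ≤
      ∑ i : Fin 2, ∑ j : Fin 2, M := Finset.sum_le_sum fun i _ => Finset.sum_le_sum fun j _ => hM _
  simp only [Finset.sum_const, Finset.card_univ, Fintype.card_fin, nsmul_eq_mul] at h2
  push_cast at h2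
  have h3 : 1 / (4 * a) ≤ 1 := by rw [div_le_one (by linarith)]; linarith
  have h4 : 0 ≤ 1 / (4 * a) := by positivity
  exact ⟨by positivity, by nlinarith⟩

lemma larF_nonneg (ha : 0 < a) {h : ℝ → ℝ} (h0 : ∀ x, 0 ≤ h x) (n : ℕ) (u : Bool × LarssonWord → ℝ) (d : ℝ) :
    0 ≤ larF h a b n u d := by
  unfold larF
  exact mul_nonneg (by positivity) (Finset.sum_nonneg fun i _ => Finset.sum_nonneg fun j _ => h0 _)

lemma larF_lip (ha : 1 / 4 < a) {h : ℝ → ℝ} {L : ℝ} (hL : 0 ≤ L) (hl : ∀ x y, |h x - h y| ≤ L * |x - y|)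
    (n : ℕ) (u : Bool × LarssonWord → ℝ) (d d' : ℝ) :
    |larF h a b n u d - larF h a b n u d'| ≤ L * 16 ^ n * |d - d'| := by
  have ha0 : 0 < a := by linarith
  have hp : 0 < a ^ n := pow_pos ha0 _
  unfold larF
  rw [← mul_sub, ← Finset.sum_sub_distrib]
  simp_rw [← Finset.sum_sub_distrib]
  rw [abs_mul, abs_of_pos (by positivity)]
  have h1 : |∑ w ∈ larWords n, ∑ v ∈ larWords n, (h (larE a b u d n w v) - h (larE a b u d' n w v))| ≤
      ∑ w ∈ larWords n, ∑ v ∈ larWords n, L * (|d - d'| / a ^ n) := by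
    refine (Finset.abs_sum_le_sum_abs _ _).trans (Finset.sum_le_sum fun w _ => ?_)
    refine (Finset.abs_sum_le_sum_abs _ _).trans (Finset.sum_le_sum fun v _ => ?_)
    refine (hl _ _).trans (le_of_eq ?_)
    congr 1
    unfold larE
    rw [← sub_div, abs_div, abs_of_pos hp]
    congr 2
    ring
  simp only [Finset.sum_const, card_larWords, nsmul_eq_mul] at h1
  push_cast at h1
  calc _ ≤ ((4 * a) ^ n)⁻¹ * (2 ^ n * (2 ^ n * (L * (|d - d'| / a ^ n)))) := by gcongr
    _ = L * (((a⁻¹) ^ n) ^ 2) * |d - d'| := by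
      rw [mul_pow, show (4:ℝ) = 2 * 2 by norm_num, mul_pow, inv_pow]
      field_simp
    _ ≤ L * (((4:ℝ) ^ n) ^ 2) * |d - d'| := by
      gcongr
      rw [inv_le_comm₀ ha0 (by norm_num)]
      linarith
    _ = _ := by
      rw [← pow_mul, mul_comm n 2, pow_mul]; norm_num

lemma larF_supp (ha : 0 < a) (hb : 0 < b) (hab : 3 * a + 2 * b < 1)
    (ht : t = (1 - 3 * a - 2 * b) / 2) {h : ℝ → ℝ} (hs : ∀ x, 1 < |x| → h x = 0)
    {u : Bool × LarssonWord → ℝ} (hu : ∀ w, u w ∈ Set.Icc 0 t) (n : ℕ) {d : ℝ} (hd : 1 < |d|) :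
    larF h a b n u d = 0 := by
  unfold larF
  rw [Finset.sum_eq_zero, mul_zero]
  intro w hw
  refine Finset.sum_eq_zero fun v hv => hs _ ?_
  have hp : 0 < a ^ n := pow_pos ha _
  have h1 := larLeft_range ha hb hab ht (fun w => hu (true, w)) v
  have h2 := larLeft_range ha hb hab ht (fun w => hu (false, w)) w
  rw [mem_larWords.1 hv] at h1
  rw [mem_larWords.1 hw] at h2
  unfold larE
  rw [abs_div, abs_of_pos hp, one_lt_div hp, lt_abs]
  rcases lt_abs.1 hd with hd | hd
  · left; linarith [h1.1, h1.2, h2.1, h2.2]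
  · right; linarith [h1.1, h1.2, h2.1, h2.2]

lemma larF_integral (ha : 0 < a) {h : ℝ → ℝ} (h0 : ∀ x, 0 ≤ h x) (hh : Measurable h)
    (hi : ∫⁻ x, ENNReal.ofReal (h x) = 1) (n : ℕ) (u : Bool × LarssonWord → ℝ) :
    ∫⁻ d, ENNReal.ofReal (larF h a b n u d) = 1 := by
  have hp : 0 < a ^ n := pow_pos ha _
  unfold larF
  have h1 : ∀ d, ENNReal.ofReal (((4 * a) ^ n)⁻¹ * ∑ w ∈ larWords n, ∑ v ∈ larWords n, h (larE a b u d n w v))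
      = ENNReal.ofReal ((4 * a) ^ n)⁻¹ * ∑ w ∈ larWords n, ∑ v ∈ larWords n, ENNReal.ofReal (h (larE a b u d n w v)) := by
    intro d
    rw [ENNReal.ofReal_mul (by positivity), ENNReal.ofReal_sum_of_nonneg
      (fun w _ => Finset.sum_nonneg fun v _ => h0 _)]
    congr 1
    refine Finset.sum_congr rfl fun w _ => ?_
    rw [ENNReal.ofReal_sum_of_nonneg (fun v _ => h0 _)]
  have h2 : ∀ w v, Measurable fun d => ENNReal.ofReal (h (larE a b u d n w v)) := by
    intro w v; unfold larE; fun_prop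
  have h3 : ∀ w v, ∫⁻ d, ENNReal.ofReal (h (larE a b u d n w v)) = ENNReal.ofReal (a ^ n) := by
    intro w v
    unfold larE
    rw [lintegral_sub_right_eq_self (fun x => ENNReal.ofReal (h (x / a ^ n)))]
    have h8 := Real.map_volume_mul_left (a := (a ^ n)⁻¹) (by positivity)
    rw [inv_inv, abs_of_pos hp] at h8
    simp_rw [div_eq_inv_mul]
    rw [← lintegral_map (μ := volume) (f := fun x => ENNReal.ofReal (h x)) (g := fun y => (a ^ n)⁻¹ * y) (by fun_prop) (by fun_prop), h8,
      lintegral_smul_measure, hi]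
    simp
  simp_rw [h1]
  rw [lintegral_const_mul _ (by fun_prop), lintegral_finsetSum _ (by fun_prop)]
  have h4 : ∀ w ∈ larWords n, ∫⁻ d, ∑ v ∈ larWords n, ENNReal.ofReal (h (larE a b u d n w v)) =
      ∑ v ∈ larWords n, ENNReal.ofReal (a ^ n) := by
    intro w _
    rw [lintegral_finsetSum _ (by fun_prop)]
    exact Finset.sum_congr rfl fun v _ => h3 w v
  rw [Finset.sum_congr rfl h4]
  simp only [Finset.sum_const, card_larWords, nsmul_eq_mul]
  rw [← ENNReal.ofReal_natCast, ← ENNReal.ofReal_mul (by positivity), ← ENNReal.ofReal_mul (by positivity),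
    ← ENNReal.ofReal_mul (by positivity), ← ENNReal.ofReal_one]
  congr 1
  push_cast
  rw [mul_pow, show (4:ℝ) = 2 * 2 by norm_num, mul_pow]
  field_simp

lemma lar_hit (ha : 0 < a) (hb : 0 < b) (hab : 3 * a + 2 * b < 1)
    (ht : t = (1 - 3 * a - 2 * b) / 2) {h : ℝ → ℝ} (hs : ∀ x, 1 < |x| → h x = 0)
    {u : Bool × LarssonWord → ℝ} (hu : ∀ w, u w ∈ Set.Icc 0 t) (N : ℕ) (d : ℝ)
    (hd : ∀ n, N ≤ n → larF h a b n u d ≠ 0) :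
    ∃ p ∈ larssonCantor a b (fun w => u (false, w)),
      ∃ q ∈ larssonCantor a b (fun w => u (true, w)), d = q - p := by
  set K : ℕ → Set ℝ := fun n => larssonLevel a b (fun w => u (false, w)) n ∩
    (fun x => x + d) ⁻¹' larssonLevel a b (fun w => u (true, w)) n with hK
  have hanti : ∀ n, K (n + 1) ⊆ K n := fun n => Set.inter_subset_inter
    (larLevel_anti ha hb hab ht (fun w => hu (false, w)) n)
    (Set.preimage_mono (larLevel_anti ha hb hab ht (fun w => hu (true, w)) n))
  have hclosed : ∀ n, IsClosed (K n) := fun n => (larLevel_compact _ n).isClosed.inter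
    ((larLevel_compact _ n).isClosed.preimage (by fun_prop))
  have hne' : ∀ n, N ≤ n → (K n).Nonempty := by
    intro n hn
    have h1 := hd n hn
    obtain ⟨w, hw, v, hv, hwv⟩ : ∃ w ∈ larWords n, ∃ v ∈ larWords n, h (larE a b u d n w v) ≠ 0 := by
      by_contra hc
      push Not at hc
      apply h1
      unfold larF
      rw [Finset.sum_eq_zero, mul_zero]
      exact fun w hw => Finset.sum_eq_zero fun v hv => hc w hw v hv
    have h2 : |larE a b u d n w v| ≤ 1 := by
      by_contra hc
      exact hwv (hs _ (not_le.1 hc))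
    have hp : 0 < a ^ n := pow_pos ha _
    unfold larE at h2
    rw [abs_div, abs_of_pos hp, div_le_one hp, abs_le] at h2
    set l1 := larssonLeft a b (fun w => u (false, w)) w
    set l2 := larssonLeft a b (fun w => u (true, w)) v
    refine ⟨max l1 (l2 - d), ?_, ?_⟩
    · simp only [larssonLevel, Set.mem_iUnion, Set.mem_setOf_eq, exists_prop]
      refine ⟨w, mem_larWords.1 hw, le_max_left _ _, max_le ?_ ?_⟩ <;> linarith [h2.1, h2.2]
    · simp only [larssonLevel, Set.mem_preimage, Set.mem_iUnion, Set.mem_setOf_eq, exists_prop]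
      refine ⟨v, mem_larWords.1 hv, ?_, ?_⟩
      · have := le_max_right l1 (l2 - d); linarith
      · rw [← le_sub_iff_add_le]
        refine max_le ?_ ?_ <;> linarith [h2.1, h2.2]
  have hmono : Antitone K := antitone_nat_of_succ_le hanti
  have hne : ∀ n, (K n).Nonempty := fun n => (hne' (max n N) (le_max_right _ _)).mono
    (hmono (le_max_left _ _))
  obtain ⟨x, hx⟩ := IsCompact.nonempty_iInter_of_sequence_nonempty_isCompact_isClosed K hanti hne
    ((larLevel_compact _ 0).inter_right ((larLevel_compact _ 0).isClosed.preimage (by fun_prop))) hclosed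
  rw [Set.mem_iInter] at hx
  exact ⟨x, Set.mem_iInter.2 fun n => (hx n).1, x + d, Set.mem_iInter.2 fun n => (hx n).2, by ring⟩

end det


section proj
variable {ι : Type*} {Ω : Type*} [MeasurableSpace Ω] {P : Measure Ω}
  [IsProbabilityMeasure P] {U : ι → Ω → ℝ}

open Classical in
noncomputable def larProj (S : Finset ι) (u : ι → ℝ) : ι → ℝ := fun i => if i ∈ S then u i else 0

lemma larProj_meas (S : Finset ι) : Measurable (larProj S : (ι → ℝ) → ι → ℝ) := by
  refine measurable_pi_lambda _ fun i => ?_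
  unfold larProj
  split_ifs <;> fun_prop

lemma larProj_indep (hU : iIndepFun U P) (hm : ∀ i, Measurable (U i)) {S T : Finset ι}
    (hST : Disjoint S T) :
    IndepFun (fun ω => larProj S (fun i => U i ω)) (fun ω => larProj T (fun i => U i ω)) P := by
  classical
  have h := hU.indepFun_finset S T hST hm
  have hf : ∀ S : Finset ι, Measurable (fun (x : S → ℝ) (i : ι) => if hi : i ∈ S then x ⟨i, hi⟩ else 0) := by
    intro S
    refine measurable_pi_lambda _ fun i => ?_
    by_cases hi : i ∈ S
    · simp only [hi, dite_true]; fun_prop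
    · simp only [hi, dite_false]; fun_prop
  have h2 := h.comp (hf S) (hf T)
  have he : ∀ S : Finset ι, ((fun (x : S → ℝ) (i : ι) => if hi : i ∈ S then x ⟨i, hi⟩ else 0) ∘
      fun ω (i : S) => U i ω) = fun ω => larProj S (fun i => U i ω) := by
    intro S
    ext ω i
    simp [larProj]
  rw [he, he] at h2
  exact h2

lemma lar_split (hU : iIndepFun U P) (hm : ∀ i, Measurable (U i)) {S T : Finset ι}
    (hST : Disjoint S T) (G : (ι → ℝ) → (ι → ℝ) → ℝ≥0∞) (hG : Measurable (Function.uncurry G)) :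
    ∫⁻ ω, G (larProj S (fun i => U i ω)) (larProj T (fun i => U i ω)) ∂P =
      ∫⁻ ω', ∫⁻ ω, G (larProj S (fun i => U i ω')) (larProj T (fun i => U i ω)) ∂P ∂P := by
  have hS : ∀ S, Measurable (fun ω => larProj S (fun i => U i ω)) := fun S =>
    (larProj_meas S).comp (measurable_pi_lambda _ hm)
  have h := (indepFun_iff_map_prod_eq_prod_map_map (hS S).aemeasurable (hS T).aemeasurable).1
    (larProj_indep hU hm hST)
  have := Measure.isProbabilityMeasure_map (μ := P) (hS T).aemeasurable
  have := Measure.isProbabilityMeasure_map (μ := P) (hS S).aemeasurable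
  have h1 : ∫⁻ ω, G (larProj S (fun i => U i ω)) (larProj T (fun i => U i ω)) ∂P =
      ∫⁻ p, Function.uncurry G p ∂(P.map (fun ω => (larProj S (fun i => U i ω), larProj T (fun i => U i ω)))) := by
    rw [lintegral_map hG ((hS S).prodMk (hS T))]
    rfl
  rw [h1, h, lintegral_prod _ hG.aemeasurable, lintegral_map hG.lintegral_prod_right' (hS S)]
  refine lintegral_congr fun ω' => ?_
  exact lintegral_map (f := fun y => Function.uncurry G (larProj S (fun i => U i ω'), y))
    (hG.comp measurable_prodMk_left) (hS T)

lemma lar_prod_group {J : Type*} (hU : iIndepFun U P) (hm : ∀ i, Measurable (U i))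
    (S : J → Finset ι) (G : J → (ι → ℝ) → ℝ≥0∞) (hG : ∀ j, Measurable (G j))
    (hdep : ∀ j, ∀ u u' : ι → ℝ, (∀ i ∈ S j, u i = u' i) → G j u = G j u') (A : Finset J)
    (hA : ∀ j ∈ A, ∀ k ∈ A, j ≠ k → Disjoint (S j) (S k)) :
    ∫⁻ ω, ∏ j ∈ A, G j (fun i => U i ω) ∂P = ∏ j ∈ A, ∫⁻ ω, G j (fun i => U i ω) ∂P := by
  classical
  induction A using Finset.induction_on with
  | empty => simp
  | insert j A hj ih =>
    rw [Finset.prod_insert hj, ← ih fun j hj k hk => hA j (Finset.mem_insert_of_mem hj) k (Finset.mem_insert_of_mem hk)]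
    have hdis : Disjoint (S j) (A.biUnion S) := by
      rw [Finset.disjoint_biUnion_right]
      intro k hk
      exact hA j (Finset.mem_insert_self _ _) k (Finset.mem_insert_of_mem hk) (by rintro rfl; exact hj hk)
    have hind := larProj_indep hU hm hdis
    have h1 : ∀ ω, G j (fun i => U i ω) = G j (larProj (S j) (fun i => U i ω)) := by
      intro ω
      refine hdep j _ _ fun i hi => by simp [larProj, hi]
    have h2 : ∀ ω, ∏ k ∈ A, G k (fun i => U i ω) = ∏ k ∈ A, G k (larProj (A.biUnion S) (fun i => U i ω)) := by
      intro ω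
      refine Finset.prod_congr rfl fun k hk => hdep k _ _ fun i hi => ?_
      have : i ∈ A.biUnion S := Finset.mem_biUnion.2 ⟨k, hk, hi⟩
      simp only [larProj, this, if_true]
    simp_rw [Finset.prod_insert hj, h1, h2]
    have hS : ∀ S, Measurable (fun ω => larProj S (fun i => U i ω)) := fun S =>
      (larProj_meas S).comp (measurable_pi_lambda _ hm)
    have hGp : Measurable (fun u => ∏ k ∈ A, G k u) := Finset.measurable_fun_prod _ fun k _ => hG k
    exact lintegral_mul_eq_lintegral_mul_lintegral_of_indepFun ((hG j).comp (hS _)) (hGp.comp (hS _))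
      (hind.comp (hG j) hGp)

end proj

section prob
variable {a b t : ℝ} {Ω : Type*} [MeasurableSpace Ω] {P : Measure Ω}
  [IsProbabilityMeasure P] {U : Bool × LarssonWord → Ω → ℝ} {h : ℝ → ℝ} {B : ℝ}

lemma lar_mean (ht : 0 < t) (ha : 0 < a) (hU : iIndepFun U P) (hm : ∀ i, Measurable (U i))
    (hlaw : ∀ p, P.map (U p) = larNu t) (h0 : ∀ x, 0 ≤ h x) (hh : Measurable h)
    (hfix : ∀ e, ENNReal.ofReal (h e) = ENNReal.ofReal (1 / (4 * a)) * ∑ i, ∑ j,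
        ∫⁻ x, ∫⁻ y, ENNReal.ofReal (h ((e - (larC a b j + y - larC a b i - x)) / a))
          ∂(larNu t) ∂(larNu t)) (e : ℝ) (w v : LarssonWord) :
    ∫⁻ ω, ENNReal.ofReal (larXi h a b e (fun i => U (false, i :: w) ω) (fun j => U (true, j :: v) ω)) ∂P
      = ENNReal.ofReal (h e) := by
  have hnu := larNu_prob ht
  have hpair : ∀ i j, ∫⁻ ω, ENNReal.ofReal (h ((e - (larC a b j + U (true, j :: v) ω - larC a b i - U (false, i :: w) ω)) / a)) ∂P
      = ∫⁻ x, ∫⁻ y, ENNReal.ofReal (h ((e - (larC a b j + y - larC a b i - x)) / a))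
          ∂(larNu t) ∂(larNu t) := by
    intro i j
    have hind := hU.indepFun (show ((false, i :: w) : Bool × LarssonWord) ≠ (true, j :: v) by simp)
    have h1 := (indepFun_iff_map_prod_eq_prod_map_map (hm _).aemeasurable (hm _).aemeasurable).1 hind
    rw [hlaw, hlaw] at h1
    have h2 := lintegral_map (μ := P) (f := fun p : ℝ × ℝ => ENNReal.ofReal (h ((e - (larC a b j + p.2 - larC a b i - p.1)) / a)))
      (by fun_prop) ((hm (false, i :: w)).prodMk (hm (true, j :: v)))
    rw [← h2, h1, lintegral_prod _ (by fun_prop)]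
  rw [hfix e]
  simp_rw [← hpair]
  unfold larXi
  have h1 : ∀ ω, ENNReal.ofReal ((1 / (4 * a)) * ∑ i, ∑ j, h ((e - (larC a b j + U (true, j :: v) ω - larC a b i - U (false, i :: w) ω)) / a))
      = ENNReal.ofReal (1 / (4 * a)) * ∑ i, ∑ j, ENNReal.ofReal (h ((e - (larC a b j + U (true, j :: v) ω - larC a b i - U (false, i :: w) ω)) / a)) := by
    intro ω
    rw [ENNReal.ofReal_mul (by positivity), ENNReal.ofReal_sum_of_nonneg
      (fun w _ => Finset.sum_nonneg fun v _ => h0 _)]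
    congr 1
    refine Finset.sum_congr rfl fun w _ => ?_
    rw [ENNReal.ofReal_sum_of_nonneg (fun v _ => h0 _)]
  simp_rw [h1]
  rw [lintegral_const_mul _ (by fun_prop), lintegral_finsetSum _ (by fun_prop)]
  congr 1
  refine Finset.sum_congr rfl fun i _ => ?_
  rw [lintegral_finsetSum _ (by fun_prop)]

/-- exponential moment of a bounded nonnegative variable with given mean -/
lemma lar_exp_bound {X : Ω → ℝ} (hX : Measurable X) {B m s : ℝ} (hm : 0 ≤ m)
    (h0 : ∀ ω, 0 ≤ X ω) (hB : ∀ ω, X ω ≤ B) (hmean : ∫⁻ ω, ENNReal.ofReal (X ω) ∂P = ENNReal.ofReal m)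
    (hs : |s| * B ≤ 1) :
    ∫⁻ ω, ENNReal.ofReal (Real.exp (s * X ω)) ∂P ≤ ENNReal.ofReal (Real.exp ((s + B * s ^ 2) * m)) := by
  have hXi : Integrable X P := Integrable.of_bound hX.aestronglyMeasurable B
    (Filter.Eventually.of_forall fun ω => by rw [Real.norm_of_nonneg (h0 ω)]; exact hB ω)
  have hE : ∫ ω, X ω ∂P = m := by
    rw [integral_eq_lintegral_of_nonneg_ae (Filter.Eventually.of_forall h0) hX.aestronglyMeasurable, hmean,
      ENNReal.toReal_ofReal hm]
  have hpt : ∀ ω, Real.exp (s * X ω) ≤ 1 + (s + B * s ^ 2) * X ω := by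
    intro ω
    have h1 : |s * X ω| ≤ 1 := by
      rw [abs_mul, abs_of_nonneg (h0 ω)]
      exact (mul_le_mul_of_nonneg_left (hB ω) (abs_nonneg s)).trans hs
    have h2 := (abs_le.1 (Real.abs_exp_sub_one_sub_id_le h1)).2
    have h3 : (s * X ω) ^ 2 ≤ B * s ^ 2 * X ω := by
      have : 0 ≤ s ^ 2 * X ω * (B - X ω) :=
        mul_nonneg (mul_nonneg (sq_nonneg s) (h0 ω)) (sub_nonneg.2 (hB ω))
      nlinarith
    linarith
  have hint : Integrable (fun ω => 1 + (s + B * s ^ 2) * X ω) P := (integrable_const _).add (hXi.const_mul _)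
  calc _ ≤ ∫⁻ ω, ENNReal.ofReal (1 + (s + B * s ^ 2) * X ω) ∂P :=
        lintegral_mono fun ω => ENNReal.ofReal_le_ofReal (hpt ω)
    _ = ENNReal.ofReal (∫ ω, (1 + (s + B * s ^ 2) * X ω) ∂P) :=
        (ofReal_integral_eq_lintegral_ofReal hint (Filter.Eventually.of_forall fun ω =>
          (Real.exp_pos _).le.trans (hpt ω))).symm
    _ ≤ _ := by
        refine ENNReal.ofReal_le_ofReal ?_
        rw [integral_add (integrable_const _) (hXi.const_mul _), integral_const_mul, hE]
        simp
        rw [add_comm]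
        exact Real.add_one_le_exp _

set_option maxHeartbeats 1000000 in
lemma lar_step (ha : 1 / 4 < a) (hb : 0 < b) (hab : 3 * a + 2 * b < 1)
    (ht : t = (1 - 3 * a - 2 * b) / 2) (hU : iIndepFun U P) (hm : ∀ i, Measurable (U i))
    (hlaw : ∀ p, P.map (U p) = larNu t) (hUt : ∀ p ω, U p ω ∈ Set.Icc 0 t)
    (h0 : ∀ x, 0 ≤ h x) (hh : Measurable h) (hM : ∀ x, 4 * h x ≤ B) (hsupp : ∀ x, 1 < |x| → h x = 0)
    (hfix : ∀ e, ENNReal.ofReal (h e) = ENNReal.ofReal (1 / (4 * a)) * ∑ i, ∑ j,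
        ∫⁻ x, ∫⁻ y, ENNReal.ofReal (h ((e - (larC a b j + y - larC a b i - x)) / a))
          ∂(larNu t) ∂(larNu t)) (d : ℝ) (n : ℕ) (μ s : ℝ) (hμ : |μ| * ((4 * a) ^ n)⁻¹ * B ≤ 1) :
    ∫⁻ ω, ENNReal.ofReal (Real.exp (μ * larF h a b (n + 1) (fun p => U p ω) d + s * larF h a b n (fun p => U p ω) d)) ∂P
    ≤ ∫⁻ ω, ENNReal.ofReal (Real.exp ((μ + B * μ ^ 2 * ((4 * a) ^ n)⁻¹ + s) * larF h a b n (fun p => U p ω) d)) ∂P := by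
  have ha0 : 0 < a := by linarith
  have ht0 : 0 < t := by rw [ht]; linarith
  set R := ((4 * a) ^ n)⁻¹ with hR
  have hR0 : 0 < R := by positivity
  obtain ⟨S, memS⟩ : ∃ S : Finset (Bool × LarssonWord), ∀ p, p ∈ S ↔ p.2.length ≤ n :=
    ⟨Finset.univ ×ˢ ((Finset.range (n + 1)).biUnion larWords), fun p => by
      simp [mem_larWords]⟩
  obtain ⟨T, memT⟩ : ∃ T : Finset (Bool × LarssonWord), ∀ p, p ∈ T ↔ p.2.length = n + 1 :=
    ⟨Finset.univ ×ˢ larWords (n + 1), fun p => by simp [mem_larWords]⟩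
  have hST : Disjoint S T := by
    rw [Finset.disjoint_left]; intro p hp hp'
    rw [memS] at hp; rw [memT] at hp'; omega
  obtain ⟨X, hX⟩ : ∃ X : (Bool × LarssonWord → ℝ) → (Bool × LarssonWord → ℝ) → LarssonWord → LarssonWord → ℝ,
      ∀ x y w v, X x y w v = larXi h a b (larE a b x d n w v) (fun i => y (false, i :: w)) (fun j => y (true, j :: v)) :=
    ⟨_, fun _ _ _ _ => rfl⟩
  have hEm := fun w v => larE_meas (a := a) (b := b) d n w v
  have hFm := larF_meas (a := a) (b := b) hh d n
  have hXm : ∀ w v, Measurable (fun p : (Bool × LarssonWord → ℝ) × (Bool × LarssonWord → ℝ) => X p.1 p.2 w v) := by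
    intro w v
    simp only [hX, larXi]
    have := hEm w v
    fun_prop
  obtain ⟨G, hG⟩ : ∃ G : (Bool × LarssonWord → ℝ) → (Bool × LarssonWord → ℝ) → ℝ≥0∞, ∀ x y, G x y =
    ENNReal.ofReal (Real.exp (μ * (R * ∑ w ∈ larWords n, ∑ v ∈ larWords n, X x y w v) + s * larF h a b n x d)) :=
    ⟨_, fun _ _ => rfl⟩
  have hGm : Measurable (Function.uncurry G) := by
    simp only [hG, Function.uncurry_def]
    fun_prop
  have hEc : ∀ u : Bool × LarssonWord → ℝ, ∀ w ∈ larWords n, ∀ v ∈ larWords n,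
      larE a b (larProj S u) d n w v = larE a b u d n w v := by
    intro u w hw v hv
    refine larE_congr d n (fun p hp => ?_) w v (mem_larWords.1 hw).le (mem_larWords.1 hv).le
    simp [larProj, (memS p).2 hp]
  have hFc : ∀ u : Bool × LarssonWord → ℝ, larF h a b n (larProj S u) d = larF h a b n u d := by
    intro u
    unfold larF
    congr 1
    refine Finset.sum_congr rfl fun w hw => Finset.sum_congr rfl fun v hv => ?_
    rw [hEc u w hw v hv]
  have hXT : ∀ x y : Bool × LarssonWord → ℝ, ∀ w ∈ larWords n, ∀ v ∈ larWords n,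
      X x (larProj T y) w v = X x y w v := by
    intro x y w hw v hv
    have h1 : ∀ i, larProj T y (false, i :: w) = y (false, i :: w) := fun i => by
      simp [larProj, memT, mem_larWords.1 hw]
    have h2 : ∀ i, larProj T y (true, i :: v) = y (true, i :: v) := fun i => by
      simp [larProj, memT, mem_larWords.1 hv]
    simp only [hX, h1, h2]
  have hXS : ∀ x y : Bool × LarssonWord → ℝ, ∀ w ∈ larWords n, ∀ v ∈ larWords n,
      X (larProj S x) y w v = X x y w v := by
    intro x y w hw v hv
    simp only [hX, hEc x w hw v hv]
  have hmean := fun e w v => lar_mean (P := P) ht0 ha0 hU hm hlaw h0 hh hfix e w v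
  have hzero : ∀ e, 1 ≤ |e| → h e = 0 := by
    intro e he
    have h1 := hmean e [] []
    have h2 : ∀ ω, larXi h a b e (fun i => U (false, i :: []) ω) (fun j => U (true, j :: []) ω) = 0 := fun ω =>
      larXi_zero ha0 hb hab ht hsupp he (fun i => hUt _ _) (fun i => hUt _ _)
    simp only [h2, ENNReal.ofReal_zero, lintegral_zero] at h1
    exact le_antisymm (ENNReal.ofReal_eq_zero.1 h1.symm) (h0 e)
  have hl : ∀ ω, ENNReal.ofReal (Real.exp (μ * larF h a b (n + 1) (fun p => U p ω) d + s * larF h a b n (fun p => U p ω) d))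
      = G (larProj S (fun p => U p ω)) (larProj T (fun p => U p ω)) := by
    intro ω
    have hss : ∑ w ∈ larWords n, ∑ v ∈ larWords n,
        X (larProj S (fun p => U p ω)) (larProj T (fun p => U p ω)) w v =
        ∑ w ∈ larWords n, ∑ v ∈ larWords n, X (fun p => U p ω) (fun p => U p ω) w v :=
      Finset.sum_congr rfl fun w hw => Finset.sum_congr rfl fun v hv => by
        rw [hXT _ _ w hw v hv, hXS _ _ w hw v hv]
    simp only [hG]
    rw [larF_succ h ha0, hFc, hss]
    simp only [hX]
    rw [hR]
  simp_rw [hl]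
  rw [lar_split hU hm hST G hGm]
  refine lintegral_mono fun ω' => ?_
  have hxt0 : ∀ p, (fun p => U p ω') p ∈ Set.Icc 0 t := fun p => hUt p ω'
  generalize (fun p => U p ω') = x at hxt0 ⊢
  have hxt : ∀ p, x p ∈ Set.Icc 0 t := hxt0
  obtain ⟨A, hA⟩ : ∃ A, A = (larWords n ×ˢ larWords n).filter (fun p => |larE a b x d n p.1 p.2| < 1) := ⟨_, rfl⟩
  have hsumX : ∀ ω, ∑ w ∈ larWords n, ∑ v ∈ larWords n, X (larProj S x) (larProj T (fun p => U p ω)) w v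
      = ∑ p ∈ A, X x (fun p => U p ω) p.1 p.2 := by
    intro ω
    rw [hA, Finset.sum_filter, Finset.sum_product]
    refine Finset.sum_congr rfl fun w hw => Finset.sum_congr rfl fun v hv => ?_
    rw [hXT _ _ w hw v hv, hXS _ _ w hw v hv]
    split_ifs with hc
    · rfl
    · rw [hX]
      exact larXi_zero ha0 hb hab ht hsupp (not_lt.1 hc) (fun i => hUt _ _) (fun i => hUt _ _)
  have hsumh : larF h a b n x d = R * ∑ p ∈ A, h (larE a b x d n p.1 p.2) := by
    rw [larF, hA, Finset.sum_filter, Finset.sum_product]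
    congr 1
    refine Finset.sum_congr rfl fun w hw => Finset.sum_congr rfl fun v hv => ?_
    split_ifs with hc
    · rfl
    · exact hzero _ (not_lt.1 hc)
  have hGeq : ∀ ω, G (larProj S x) (larProj T (fun p => U p ω)) =
      ENNReal.ofReal (Real.exp (s * larF h a b n x d)) *
        ∏ p ∈ A, ENNReal.ofReal (Real.exp ((μ * R) * X x (fun p => U p ω) p.1 p.2)) := by
    intro ω
    simp only [hG]
    rw [hsumX, hFc, add_comm, Real.exp_add, ENNReal.ofReal_mul (Real.exp_pos _).le, ← mul_assoc, Finset.mul_sum,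
      Real.exp_sum, ENNReal.ofReal_prod_of_nonneg (fun _ _ => (Real.exp_pos _).le)]
  simp_rw [hGeq]
  have hX1 : ∀ w v, Measurable (fun y : Bool × LarssonWord → ℝ => X x y w v) := fun w v =>
    (hXm w v).comp (measurable_prodMk_left (x := x))
  have hUm : Measurable (fun ω p => U p ω) := measurable_pi_lambda _ hm
  rw [lintegral_const_mul]
  swap
  · refine Finset.measurable_fun_prod _ fun p _ => ?_
    have := (hX1 p.1 p.2).comp hUm
    exact (Real.measurable_exp.comp (this.const_mul _)).ennreal_ofReal
  rw [lar_prod_group hU hm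
    (fun p : LarssonWord × LarssonWord => (Finset.univ.image fun i : Fin 2 => ((false, i :: p.1) : Bool × LarssonWord)) ∪
      (Finset.univ.image fun i : Fin 2 => ((true, i :: p.2) : Bool × LarssonWord)))
    (fun p y => ENNReal.ofReal (Real.exp ((μ * R) * X x y p.1 p.2)))
    (fun p => (Real.measurable_exp.comp ((hX1 p.1 p.2).const_mul _)).ennreal_ofReal)]
  · have hle : ∀ p ∈ A, ∫⁻ ω, ENNReal.ofReal (Real.exp ((μ * R) * X x (fun p => U p ω) p.1 p.2)) ∂P ≤
        ENNReal.ofReal (Real.exp ((μ * R + B * (μ * R) ^ 2) * h (larE a b x d n p.1 p.2))) := by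
      intro p _
      refine lar_exp_bound ((hX1 p.1 p.2).comp hUm) (h0 _) (fun ω => ?_) (fun ω => ?_) ?_ ?_
      · simp only [Function.comp_apply, hX]
        exact (larXi_bound (b := b) ha h0 (M := B / 4) (fun x => by linarith [hM x]) _ _ _).1
      · have := (larXi_bound (b := b) ha h0 (M := B / 4) (fun x => by linarith [hM x])
          (larE a b x d n p.1 p.2) (fun i => U (false, i :: p.1) ω) (fun j => U (true, j :: p.2) ω)).2
        simp only [Function.comp_apply, hX]
        linarith
      · simp only [Function.comp_apply, hX]
        exact hmean _ _ _
      · rw [abs_mul, abs_of_pos hR0]; exact hμ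
    refine (mul_le_mul_right (Finset.prod_le_prod' hle) _).trans (le_of_eq ?_)
    rw [← ENNReal.ofReal_prod_of_nonneg (fun _ _ => (Real.exp_pos _).le), ← Real.exp_sum, ← Finset.mul_sum,
      ← ENNReal.ofReal_mul (Real.exp_pos _).le, ← Real.exp_add]
    congr 2
    rw [hsumh]
    ring
  · intro p u u' huu
    have h1 : ∀ i, u (false, i :: p.1) = u' (false, i :: p.1) := fun i => huu _ (by simp)
    have h2 : ∀ i, u (true, i :: p.2) = u' (true, i :: p.2) := fun i => huu _ (by simp)
    simp only [hX, h1, h2]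
  · intro p hp q hq hpq
    simp only [hA, Finset.mem_filter, Finset.mem_product, mem_larWords] at hp hq
    rw [Finset.disjoint_left]
    intro z hz hz'
    apply hpq
    have := larE_match ha0 hb hab ht hxt d n p.1 p.2 q.1 q.2 hp.1.1 hp.1.2 hq.1.1 hq.1.2 hp.2 hq.2
    simp only [Finset.mem_union, Finset.mem_image, Finset.mem_univ, true_and] at hz hz'
    refine Prod.ext_iff.2 (this ?_)
    rcases hz with ⟨i, rfl⟩ | ⟨i, rfl⟩ <;> rcases hz' with ⟨j, hj⟩ | ⟨j, hj⟩ <;> simp at hj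
    · exact Or.inl hj.2.symm
    · exact Or.inr hj.2.symm

end prob


section abs
variable {Ω : Type*} [MeasurableSpace Ω] {P : Measure Ω} [IsProbabilityMeasure P]
  {F : ℕ → Ω → ℝ → ℝ} {B r L : ℝ}

lemma lar_moment (h0 : ∀ n ω d, 0 ≤ F n ω d) (hF0 : ∀ ω d, F 0 ω d ≤ B)
    (hB : 1 ≤ B) (hr : 1 < r)
    (hstep : ∀ d n μ s, |μ| * (r ^ n)⁻¹ * B ≤ 1 →
      ∫⁻ ω, ENNReal.ofReal (Real.exp (μ * F (n + 1) ω d + s * F n ω d)) ∂P ≤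
      ∫⁻ ω, ENNReal.ofReal (Real.exp ((μ + B * μ ^ 2 * (r ^ n)⁻¹ + s) * F n ω d)) ∂P)
    {c : ℝ} (hc : c = (1 - r⁻¹) / (4 * B)) (d : ℝ) (n : ℕ) :
    ∫⁻ ω, ENNReal.ofReal (Real.exp (c * (1 + (r ^ n)⁻¹) * F n ω d)) ∂P ≤
      ENNReal.ofReal (Real.exp (2 * c * B)) := by
  have hr1 : r⁻¹ < 1 := inv_lt_one_of_one_lt₀ hr
  have hr0 : 0 < r⁻¹ := by positivity
  have hc0 : 0 < c := by rw [hc]; apply div_pos <;> linarith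
  have hcB : 4 * B * c = 1 - r⁻¹ := by rw [hc]; field_simp
  induction n with
  | zero =>
    calc _ ≤ ∫⁻ ω, ENNReal.ofReal (Real.exp (2 * c * B)) ∂P := by
          refine lintegral_mono fun ω => ENNReal.ofReal_le_ofReal (Real.exp_le_exp.2 ?_)
          have := mul_le_mul_of_nonneg_left (hF0 ω d) (by positivity : 0 ≤ 2 * c)
          simp only [pow_zero, inv_one]
          linarith
      _ = _ := by simp
  | succ n ih =>
    refine le_trans ?_ ih
    have hq1 : (r ^ n)⁻¹ ≤ 1 := inv_le_one_of_one_le₀ (one_le_pow₀ hr.le)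
    have hq0 : 0 < (r ^ n)⁻¹ := by positivity
    have hqs : (r ^ (n + 1))⁻¹ = (r ^ n)⁻¹ * r⁻¹ := by rw [pow_succ, mul_inv]
    have hst := hstep d n (c * (1 + (r ^ (n + 1))⁻¹)) 0
    rw [hqs] at hst ⊢
    generalize (r ^ n)⁻¹ = q at hq1 hq0 hst ⊢
    have hqr : q * r⁻¹ ≤ 1 := mul_le_one₀ hq1 hr0.le hr1.le
    have hμ0 : 0 < c * (1 + q * r⁻¹) := by positivity
    have hμ2 : c * (1 + q * r⁻¹) ≤ 2 * c := by nlinarith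
    have hcon : |c * (1 + q * r⁻¹)| * q * B ≤ 1 := by
      rw [abs_of_pos hμ0]
      calc _ ≤ 2 * c * 1 * B := by gcongr
        _ ≤ 1 := by linarith
    have h2 := hst hcon
    simp only [zero_mul, add_zero] at h2
    refine h2.trans (lintegral_mono fun ω => ENNReal.ofReal_le_ofReal (Real.exp_le_exp.2 ?_))
    refine mul_le_mul_of_nonneg_right ?_ (h0 _ _ _)
    have h3 : B * (c * (1 + q * r⁻¹)) ^ 2 * q ≤ B * (2 * c) ^ 2 * q := by gcongr
    have h4 : B * (2 * c) ^ 2 * q = c * q * (1 - r⁻¹) := by rw [← hcB]; ring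
    rw [h4] at h3
    nlinarith

lemma lar_incr (h0 : ∀ n ω d, 0 ≤ F n ω d) (hF0 : ∀ ω d, F 0 ω d ≤ B)
    (hB : 1 ≤ B) (hr : 1 < r)
    (hstep : ∀ d n μ s, |μ| * (r ^ n)⁻¹ * B ≤ 1 →
      ∫⁻ ω, ENNReal.ofReal (Real.exp (μ * F (n + 1) ω d + s * F n ω d)) ∂P ≤
      ∫⁻ ω, ENNReal.ofReal (Real.exp ((μ + B * μ ^ 2 * (r ^ n)⁻¹ + s) * F n ω d)) ∂P)
    {c : ℝ} (hc : c = (1 - r⁻¹) / (4 * B)) (d : ℝ) (n : ℕ) (σ : ℝ) (hσ : |σ| = 1) :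
    ∫⁻ ω, ENNReal.ofReal (Real.exp (σ * (c * √r ^ n) * (F (n + 1) ω d - F n ω d))) ∂P ≤
      ENNReal.ofReal (Real.exp (2 * c * B)) := by
  have hr1 : r⁻¹ < 1 := inv_lt_one_of_one_lt₀ hr
  have hr0 : 0 < r⁻¹ := by positivity
  have hc0 : 0 < c := by rw [hc]; apply div_pos <;> linarith
  have hcB : 4 * B * c = 1 - r⁻¹ := by rw [hc]; field_simp
  have hσ2 : σ ^ 2 = 1 := by rw [← sq_abs, hσ]; norm_num
  have hs1 : 1 ≤ √r := by rw [Real.one_le_sqrt]; exact hr.le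
  have hsr : √r ≤ r := by rw [Real.sqrt_le_left (by linarith)]; nlinarith
  have hq0 : 0 < (r ^ n)⁻¹ := by positivity
  have hcon : |σ * (c * √r ^ n)| * (r ^ n)⁻¹ * B ≤ 1 := by
    rw [abs_mul, hσ, abs_of_pos (by positivity), one_mul]
    calc _ ≤ c * r ^ n * (r ^ n)⁻¹ * B := by gcongr
      _ = c * B := by field_simp
      _ ≤ 1 := by linarith
  have h1 := hstep d n (σ * (c * √r ^ n)) (-(σ * (c * √r ^ n))) hcon
  have h2 : σ * (c * √r ^ n) + B * (σ * (c * √r ^ n)) ^ 2 * (r ^ n)⁻¹ + -(σ * (c * √r ^ n)) = B * c ^ 2 := by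
    have : (√r ^ n) ^ 2 = r ^ n := by rw [← pow_mul, mul_comm, pow_mul, Real.sq_sqrt (by linarith)]
    rw [mul_pow, mul_pow, hσ2, this]
    field_simp
    ring
  rw [h2] at h1
  calc _ = _ := by
        refine lintegral_congr fun ω => ?_
        congr 2
        ring
    _ ≤ _ := h1
    _ ≤ ∫⁻ ω, ENNReal.ofReal (Real.exp (c * (1 + (r ^ n)⁻¹) * F n ω d)) ∂P := by
        refine lintegral_mono fun ω => ENNReal.ofReal_le_ofReal (Real.exp_le_exp.2 ?_)
        refine mul_le_mul_of_nonneg_right ?_ (h0 _ _ _)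
        have : 0 < c * (r ^ n)⁻¹ := by positivity
        nlinarith
    _ ≤ _ := lar_moment h0 hF0 hB hr hstep hc d n

lemma lar_tail (hFm : ∀ n d, Measurable (fun ω => F n ω d))
    (h0 : ∀ n ω d, 0 ≤ F n ω d) (hF0 : ∀ ω d, F 0 ω d ≤ B)
    (hB : 1 ≤ B) (hr : 1 < r)
    (hstep : ∀ d n μ s, |μ| * (r ^ n)⁻¹ * B ≤ 1 →
      ∫⁻ ω, ENNReal.ofReal (Real.exp (μ * F (n + 1) ω d + s * F n ω d)) ∂P ≤
      ∫⁻ ω, ENNReal.ofReal (Real.exp ((μ + B * μ ^ 2 * (r ^ n)⁻¹ + s) * F n ω d)) ∂P)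
    {c : ℝ} (hc : c = (1 - r⁻¹) / (4 * B)) (d : ℝ) (n : ℕ) :
    P {ω | n * Real.log 128 / (c * √r ^ n) < |F (n + 1) ω d - F n ω d|} ≤
      2 * (ENNReal.ofReal (Real.exp (2 * c * B)) / 128 ^ n) := by
  have hr1 : r⁻¹ < 1 := inv_lt_one_of_one_lt₀ hr
  have hc0 : 0 < c := by rw [hc]; apply div_pos <;> linarith
  have hs0 : 0 < √r := Real.sqrt_pos.2 (by linarith)
  have hp : 0 < c * √r ^ n := by positivity
  have hm : ∀ σ : ℝ, Measurable (fun ω => ENNReal.ofReal (Real.exp (σ * (c * √r ^ n) * (F (n + 1) ω d - F n ω d)))) := by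
    intro σ
    have h1 := hFm n d
    have h2 := hFm (n + 1) d
    fun_prop
  have hmk : ∀ σ : ℝ, |σ| = 1 → P {ω | 128 ^ n ≤ ENNReal.ofReal (Real.exp (σ * (c * √r ^ n) * (F (n + 1) ω d - F n ω d)))}
      ≤ ENNReal.ofReal (Real.exp (2 * c * B)) / 128 ^ n := by
    intro σ hσ
    refine (meas_ge_le_lintegral_div (hm σ).aemeasurable (by positivity) (by finiteness)).trans ?_
    gcongr
    exact lar_incr h0 hF0 hB hr hstep hc d n σ hσ
  have hex : ∀ x : ℝ, n * Real.log 128 / (c * √r ^ n) < x → (128 : ℝ≥0∞) ^ n ≤ ENNReal.ofReal (Real.exp (c * √r ^ n * x)) := by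
    intro x hx
    rw [div_lt_iff₀ hp] at hx
    have h1 : (128 : ℝ≥0∞) ^ n = ENNReal.ofReal (Real.exp (n * Real.log 128)) := by
      rw [Real.exp_nat_mul, Real.exp_log (by norm_num), ENNReal.ofReal_pow (by norm_num)]
      norm_num
    rw [h1]
    refine ENNReal.ofReal_le_ofReal (Real.exp_le_exp.2 ?_)
    linarith
  have hsub : {ω | n * Real.log 128 / (c * √r ^ n) < |F (n + 1) ω d - F n ω d|} ⊆
      {ω | 128 ^ n ≤ ENNReal.ofReal (Real.exp (1 * (c * √r ^ n) * (F (n + 1) ω d - F n ω d)))} ∪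
      {ω | 128 ^ n ≤ ENNReal.ofReal (Real.exp (-1 * (c * √r ^ n) * (F (n + 1) ω d - F n ω d)))} := by
    intro ω hω
    rcases lt_abs.1 (show n * Real.log 128 / (c * √r ^ n) < |F (n + 1) ω d - F n ω d| from hω) with h | h
    · left
      show (128 : ℝ≥0∞) ^ n ≤ _
      convert hex _ h using 3
      ring
    · right
      show (128 : ℝ≥0∞) ^ n ≤ _
      convert hex _ h using 3
      ring
  calc _ ≤ _ := measure_mono hsub
    _ ≤ _ := measure_union_le _ _
    _ ≤ _ := add_le_add (hmk 1 (by simp)) (hmk (-1) (by simp))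
    _ = _ := (two_mul _).symm

lemma lar_unif (hFm : ∀ n d, Measurable (fun ω => F n ω d))
    (h0 : ∀ n ω d, 0 ≤ F n ω d) (hF0 : ∀ ω d, F 0 ω d ≤ B)
    (hB : 1 ≤ B) (hr : 1 < r)
    (hstep : ∀ d n μ s, |μ| * (r ^ n)⁻¹ * B ≤ 1 →
      ∫⁻ ω, ENNReal.ofReal (Real.exp (μ * F (n + 1) ω d + s * F n ω d)) ∂P ≤
      ∫⁻ ω, ENNReal.ofReal (Real.exp ((μ + B * μ ^ 2 * (r ^ n)⁻¹ + s) * F n ω d)) ∂P)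
    (hL : 0 ≤ L) (hlip : ∀ n ω d d', |F n ω d - F n ω d'| ≤ L * 16 ^ n * |d - d'|) :
    ∃ ε : ℕ → ℝ, (∀ n, 0 ≤ ε n) ∧ Summable ε ∧ ∀ᵐ ω ∂P, ∀ᶠ n in Filter.atTop, ∀ d ∈ Set.Icc (-1 : ℝ) 1,
      |F (n + 1) ω d - F n ω d| ≤ ε n := by
  obtain ⟨c, hc⟩ : ∃ c, c = (1 - r⁻¹) / (4 * B) := ⟨_, rfl⟩
  have hr1 : r⁻¹ < 1 := inv_lt_one_of_one_lt₀ hr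
  have hc0 : 0 < c := by rw [hc]; apply div_pos <;> linarith
  have hs0 : 0 < √r := Real.sqrt_pos.2 (by linarith)
  have hs1 : 1 < √r := by rw [Real.lt_sqrt (by norm_num)]; linarith
  have hl0 : 0 < Real.log 128 := Real.log_pos (by norm_num)
  refine ⟨fun n => n * Real.log 128 / (c * √r ^ n) + 17 * L * (1 / 4) ^ n, fun n => by positivity, ?_, ?_⟩
  · refine Summable.add ?_ ((summable_geometric_of_lt_one (by norm_num) (by norm_num)).mul_left _)
    have h1 : Summable (fun n : ℕ => (n : ℝ) ^ 1 * (√r)⁻¹ ^ n) := by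
      refine summable_pow_mul_geometric_of_norm_lt_one 1 ?_
      rw [Real.norm_of_nonneg (by positivity)]
      exact inv_lt_one_of_one_lt₀ hs1
    refine (h1.mul_left (Real.log 128 / c)).congr fun n => ?_
    rw [inv_pow]
    field_simp
  · set bad : ℕ → Set Ω := fun n => ⋃ k ∈ Finset.Icc (-(64 : ℤ) ^ n) (64 ^ n),
      {ω | n * Real.log 128 / (c * √r ^ n) < |F (n + 1) ω ((k : ℝ) / 64 ^ n) - F n ω ((k : ℝ) / 64 ^ n)|} with hbad
    have hbn : ∀ n, P (bad n) ≤ ENNReal.ofReal (6 * Real.exp (2 * c * B) * (1 / 2) ^ n) := by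
      intro n
      calc P (bad n) ≤ _ := measure_biUnion_finset_le _ _
        _ ≤ ∑ k ∈ Finset.Icc (-(64 : ℤ) ^ n) (64 ^ n), ENNReal.ofReal (2 * Real.exp (2 * c * B) * (1 / 128) ^ n) := by
            refine Finset.sum_le_sum fun k _ => (lar_tail hFm h0 hF0 hB hr hstep hc _ n).trans (le_of_eq ?_)
            rw [ENNReal.ofReal_mul (by positivity), ENNReal.ofReal_mul (by norm_num), ENNReal.ofReal_pow (by norm_num),
              mul_assoc, div_eq_mul_inv, ENNReal.ofReal_div_of_pos (by norm_num)]
            simp [ENNReal.inv_pow, mul_assoc]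
        _ = ENNReal.ofReal ((2 * 64 ^ n + 1) * (2 * Real.exp (2 * c * B) * (1 / 128) ^ n)) := by
            have : ((64 : ℤ) ^ n + 1 - -64 ^ n).toNat = 2 * 64 ^ n + 1 := by
              have : ((64 : ℤ) ^ n + 1 - -64 ^ n) = ((2 * 64 ^ n + 1 : ℕ) : ℤ) := by push_cast; ring
              rw [this, Int.toNat_natCast]
            rw [Finset.sum_const, Int.card_Icc, nsmul_eq_mul, this, ← ENNReal.ofReal_natCast,
              ← ENNReal.ofReal_mul (by positivity)]
            push_cast
            rfl
        _ ≤ _ := by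
            refine ENNReal.ofReal_le_ofReal ?_
            have h64 : (1 : ℝ) ≤ 64 ^ n := one_le_pow₀ (by norm_num)
            calc _ ≤ (3 * 64 ^ n) * (2 * Real.exp (2 * c * B) * (1 / 128 : ℝ) ^ n) := by gcongr; linarith
              _ = 6 * Real.exp (2 * c * B) * (64 ^ n * (1 / 128 : ℝ) ^ n) := by ring
              _ = _ := by rw [← mul_pow]; norm_num
    have hsum : ∑' n, P (bad n) ≠ ∞ := by
      refine ne_top_of_le_ne_top ?_ (ENNReal.tsum_le_tsum hbn)
      exact (Summable.tsum_ofReal_ne_top ((summable_geometric_of_lt_one (by norm_num) (by norm_num)).mul_left _))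
    filter_upwards [ae_eventually_notMem hsum] with ω hω
    filter_upwards [hω] with n hn d hd
    have h64 : (0 : ℝ) < 64 ^ n := by positivity
    set k : ℤ := ⌊d * 64 ^ n⌋ with hk
    have hk1 : (k : ℝ) ≤ d * 64 ^ n := Int.floor_le _
    have hk2 : d * 64 ^ n < k + 1 := Int.lt_floor_add_one _
    have hkm : k ∈ Finset.Icc (-(64 : ℤ) ^ n) (64 ^ n) := by
      rw [Finset.mem_Icc]
      constructor
      · rw [hk, Int.le_floor]; push_cast; nlinarith [hd.1]
      · have : (k : ℝ) ≤ 64 ^ n := by nlinarith [hd.2]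
        exact_mod_cast this
    have hg : |F (n + 1) ω ((k : ℝ) / 64 ^ n) - F n ω ((k : ℝ) / 64 ^ n)| ≤ n * Real.log 128 / (c * √r ^ n) := by
      by_contra hcon
      exact hn (Set.mem_biUnion (x := k) (by exact_mod_cast hkm) (not_le.1 hcon))
    have hdist : |d - (k : ℝ) / 64 ^ n| ≤ (1 / 64) ^ n := by
      have h2 : (1 / 64 : ℝ) ^ n = 1 / 64 ^ n := by rw [div_pow, one_pow]
      have h3 : d - (k : ℝ) / 64 ^ n = (d * 64 ^ n - k) / 64 ^ n := by field_simp
      rw [h2, h3, abs_div, abs_of_pos h64, abs_of_nonneg (by linarith)]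
      gcongr
      linarith
    have hl1 := hlip (n + 1) ω d ((k : ℝ) / 64 ^ n)
    have hl2 := hlip n ω d ((k : ℝ) / 64 ^ n)
    have e1 : L * 16 ^ (n + 1) * |d - (k : ℝ) / 64 ^ n| ≤ L * 16 ^ (n + 1) * (1 / 64) ^ n := by gcongr
    have e2 : L * 16 ^ n * |d - (k : ℝ) / 64 ^ n| ≤ L * 16 ^ n * (1 / 64) ^ n := by gcongr
    have e3 : L * 16 ^ (n + 1) * (1 / 64) ^ n + L * 16 ^ n * (1 / 64) ^ n = 17 * L * (1 / 4) ^ n := by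
      have : (1 / 4 : ℝ) ^ n = 16 ^ n * (1 / 64) ^ n := by rw [← mul_pow]; norm_num
      rw [this]; ring
    have hl1' := abs_le.1 (hl1.trans e1)
    have hl2' := abs_le.1 (hl2.trans e2)
    have hg' := abs_le.1 hg
    rw [abs_le]
    constructor <;> linarith [hl1'.1, hl1'.2, hl2'.1, hl2'.2, hg'.1, hg'.2]

lemma lar_interval {f : ℕ → ℝ → ℝ} {ε : ℕ → ℝ} (hε0 : ∀ n, 0 ≤ ε n) (hε : Summable ε)
    (hf : ∀ᶠ n in Filter.atTop, ∀ d ∈ Set.Icc (-1 : ℝ) 1, |f (n + 1) d - f n d| ≤ ε n)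
    (hcont : ∀ n, Continuous (f n)) (hsupp : ∀ n d, 1 < |d| → f n d = 0)
    (hint : ∀ n, ∫⁻ d, ENNReal.ofReal (f n d) = 1) :
    ∃ x y : ℝ, x < y ∧ ∃ N, ∀ d ∈ Set.Ioo x y, ∀ n, N ≤ n → f n d ≠ 0 := by
  have htail := tendsto_sum_nat_add ε
  obtain ⟨N, hN, hNt⟩ := (hf.and (htail.eventually_lt_const (by norm_num : (0:ℝ) < 1 / 8))).exists_forall_of_atTop.imp
    fun N h => (⟨fun n hn => (h n hn).1, (h N le_rfl).2⟩ : (∀ n, N ≤ n → _) ∧ _)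
  have hdiff : ∀ d ∈ Set.Icc (-1 : ℝ) 1, ∀ k, |f (N + k) d - f N d| ≤ ∑ i ∈ Finset.range k, ε (i + N) := by
    intro d hd k
    induction k with
    | zero => simp
    | succ k ih =>
      rw [Finset.sum_range_succ]
      have h1 := hN (N + k) (by omega) d hd
      rw [add_comm k N]
      have := abs_add_le (f (N + k + 1) d - f (N + k) d) (f (N + k) d - f N d)
      rw [sub_add_sub_cancel] at this
      rw [← add_assoc]
      linarith
  have hlt : ∀ d ∈ Set.Icc (-1 : ℝ) 1, ∀ k, |f (N + k) d - f N d| < 1 / 8 := by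
    intro d hd k
    refine (hdiff d hd k).trans_lt (lt_of_le_of_lt ?_ hNt)
    exact ((summable_nat_add_iff N).2 hε).sum_le_tsum _ (fun i _ => hε0 _)
  have hex : ∃ d0, 1 / 4 < f N d0 := by
    by_contra! hcon
    have h1 : ∀ d, ENNReal.ofReal (f N d) ≤ (Set.Icc (-1 : ℝ) 1).indicator (fun _ => ENNReal.ofReal (1 / 4)) d := by
      intro d
      by_cases hd : d ∈ Set.Icc (-1 : ℝ) 1
      · rw [Set.indicator_of_mem hd]; exact ENNReal.ofReal_le_ofReal (hcon d)
      · rw [hsupp N d]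
        · simp
        · by_contra hc
          exact hd (abs_le.1 (not_lt.1 hc))
    have h2 := lintegral_mono (μ := volume) h1
    rw [hint, lintegral_indicator measurableSet_Icc, setLIntegral_const, Real.volume_Icc,
      ← ENNReal.ofReal_mul (by norm_num)] at h2
    have h3 : ENNReal.ofReal (1 / 4 * (1 - -1)) < 1 := by
      rw [ENNReal.ofReal_lt_one]; norm_num
    exact absurd h2 (not_le.2 h3)
  obtain ⟨d0, hd0⟩ := hex
  have hopen : IsOpen {d | 1 / 4 < f N d} := isOpen_lt continuous_const (hcont N)
  obtain ⟨δ, hδ, hball⟩ := Metric.isOpen_iff.1 hopen d0 hd0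
  refine ⟨d0 - δ, d0 + δ, by linarith, N, fun d hd n hn => ?_⟩
  rw [← Real.ball_eq_Ioo] at hd
  have hfd : 1 / 4 < f N d := hball hd
  have hdI : d ∈ Set.Icc (-1 : ℝ) 1 := by
    by_contra hc
    have : f N d = 0 := hsupp N d (by
      by_contra hc'
      exact hc (abs_le.1 (not_lt.1 hc')))
    linarith
  obtain ⟨k, rfl⟩ := Nat.exists_eq_add_of_le hn
  have := (abs_lt.1 (hlt d hdI k)).1
  intro h0
  linarith

end abs

lemma lar_main_clamped {a b : ℝ} (ha : 1 / 4 < a) (hb : 0 < b) (hab : 3 * a + 2 * b < 1) {t : ℝ}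
    (ht : t = (1 - 3 * a - 2 * b) / 2)
    {Ω : Type*} [MeasurableSpace Ω] {P : Measure Ω} [IsProbabilityMeasure P]
    {U : Bool × LarssonWord → Ω → ℝ} (hm : ∀ p, Measurable (U p))
    (hlaw : ∀ p, P.map (U p) = larNu t) (hU : iIndepFun U P)
    (hUt : ∀ p ω, U p ω ∈ Set.Icc 0 t) :
    ∀ᵐ ω ∂P, ∃ x y : ℝ, x < y ∧ Set.Ioo x y ⊆
      {d : ℝ | ∃ p ∈ larssonCantor a b (fun w => U (false, w) ω),
               ∃ q ∈ larssonCantor a b (fun w => U (true, w) ω), d = q - p} := by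
  have ha0 : 0 < a := by linarith
  have ht0 : 0 < t := by rw [ht]; linarith
  obtain ⟨h, h0, hM, hsupp, hlip, hint, hfix⟩ := lar_exists_h ha0 hb hab ht
  have hL : (0 : ℝ) ≤ 2 / t ^ 2 := by positivity
  have hcont : Continuous h := by
    have : LipschitzWith (Real.toNNReal (2 / t ^ 2)) h :=
      LipschitzWith.of_dist_le_mul fun x y => by
        rw [Real.dist_eq, Real.dist_eq, Real.coe_toNNReal _ hL]; exact hlip x y
    exact this.continuous
  have hh := hcont.measurable
  have hUm : Measurable (fun ω p => U p ω) := measurable_pi_lambda _ hm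
  have hMB : ∀ x, 4 * h x ≤ 4 / t + 1 := by
    intro x
    have h1 := hM x
    have : 4 / t = 4 * (1 / t) := by ring
    linarith
  have hB1 : 1 ≤ 4 / t + 1 := by
    have : 0 < 4 / t := by positivity
    linarith
  obtain ⟨ε, hε0, hε, hae⟩ := lar_unif (P := P) (F := fun n ω d => larF h a b n (fun p => U p ω) d)
    (B := 4 / t + 1) (r := 4 * a) (L := 2 / t ^ 2)
    (fun n d => (larF_meas (a := a) (b := b) hh d n).comp hUm) (fun n ω d => larF_nonneg ha0 h0 _ _ _)
    (fun ω d => by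
      have h1 := hMB d
      have h2 := h0 d
      simp [larF, larWords, larE, larssonLeft]
      linarith) hB1 (by linarith)
    (fun d n μ s hμ => lar_step ha hb hab ht hU hm hlaw hUt h0 hh hMB hsupp hfix d n μ s hμ) hL
    (fun n ω d d' => larF_lip ha hL hlip _ _ _ _)
  filter_upwards [hae] with ω hω
  obtain ⟨x, y, hxy, N, hN⟩ := lar_interval (f := fun n d => larF h a b n (fun p => U p ω) d) hε0 hε hω
    (fun n => by unfold larF larE; fun_prop)
    (fun n d hd => larF_supp ha0 hb hab ht hsupp (fun p => hUt p ω) n hd)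
    (fun n => larF_integral ha0 h0 hh hint _ _)
  exact ⟨x, y, hxy, fun d hd => lar_hit ha0 hb hab ht hsupp (fun p => hUt p ω) N d (hN d hd)⟩

/-- Almost surely, the algebraic difference `C₂ − C₁` of two independent copies of
Larsson's random Cantor set contains a nonempty open interval. -/
theorem larsson_difference_contains_interval
    (a b : ℝ) (ha : 1 / 4 < a) (hb : 0 < b) (hab : 3 * a + 2 * b < 1)
    {Ω : Type*} [MeasurableSpace Ω] (P : Measure Ω) [IsProbabilityMeasure P]
    (U : Bool × LarssonWord → Ω → ℝ)
    (hUmeas : ∀ p, Measurable (U p))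
    (hUlaw : ∀ p, P.map (U p) =
      (ENNReal.ofReal ((1 - 3 * a - 2 * b) / 2))⁻¹ •
        volume.restrict (Set.Icc 0 ((1 - 3 * a - 2 * b) / 2)))
    (hUindep : iIndepFun U P) :
    ∀ᵐ ω ∂P, ∃ x y : ℝ, x < y ∧ Set.Ioo x y ⊆
      {d : ℝ | ∃ p ∈ larssonCantor a b (fun w => U (false, w) ω),
               ∃ q ∈ larssonCantor a b (fun w => U (true, w) ω), d = q - p} := by
  obtain ⟨t, ht⟩ : ∃ t, t = (1 - 3 * a - 2 * b) / 2 := ⟨_, rfl⟩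
  rw [← ht] at hUlaw
  have hlaw : ∀ p, P.map (U p) = larNu t := hUlaw
  have ht0 : 0 < t := by rw [ht]; linarith
  have hcm : Measurable (fun x : ℝ => max 0 (min t x)) := by fun_prop
  have hmem : ∀ᵐ ω ∂P, ∀ p, U p ω ∈ Set.Icc 0 t := by
    rw [ae_all_iff]
    intro p
    have h1 : ∀ᵐ x ∂(P.map (U p)), x ∈ Set.Icc 0 t := by
      rw [hUlaw p]
      exact Measure.ae_smul_measure (ae_restrict_mem measurableSet_Icc) _
    exact ae_of_ae_map (hUmeas p).aemeasurable h1
  have heq : ∀ᵐ ω ∂P, ∀ p, max 0 (min t (U p ω)) = U p ω := by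
    filter_upwards [hmem] with ω hω p
    rw [min_eq_right (hω p).2, max_eq_right (hω p).1]
  have hmain := lar_main_clamped (P := P) ha hb hab ht (U := fun p ω => max 0 (min t (U p ω)))
    (fun p => hcm.comp (hUmeas p))
    (fun p => by
      rw [← hlaw p]
      refine Measure.map_congr ?_
      filter_upwards [heq] with ω hω using hω p)
    (hUindep.comp (fun _ x => max 0 (min t x)) (fun _ => hcm))
    (fun p ω => ⟨le_max_left _ _, max_le ht0.le (min_le_left _ _)⟩)
  filter_upwards [hmain, heq] with ω h1 h2
  simpa only [h2] using h1
end

section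
/- The probability that the algebraic difference C_2 − C_1 = {y − x : x ∈ C_1, y ∈ C_2} contains a nonempty open interval equals 0 or 1. -/
open MeasureTheory ProbabilityTheory

lemma larssonLeft_continuous (a b : ℝ) (w : LarssonWord) :
    Continuous (fun u : LarssonWord → ℝ => larssonLeft a b u w) := by
  induction w with
  | nil => simpa [larssonLeft] using continuous_const
  | cons i w ih =>
    simp only [larssonLeft]
    exact ih.add (continuous_const.mul (continuous_const.add (continuous_apply _)))

lemma larssonWord_finite (n : ℕ) : {w : LarssonWord | w.length = n}.Finite :=
  List.finite_length_eq (Fin 2) n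

lemma larssonCantor_closed (a b : ℝ) :
    IsClosed {p : (LarssonWord → ℝ) × ℝ | p.2 ∈ larssonCantor a b p.1} := by
  have : {p : (LarssonWord → ℝ) × ℝ | p.2 ∈ larssonCantor a b p.1} =
      ⋂ n : ℕ, ⋃ w ∈ {w : LarssonWord | w.length = n},
        {p : (LarssonWord → ℝ) × ℝ | larssonLeft a b p.1 w ≤ p.2 ∧
          p.2 ≤ larssonLeft a b p.1 w + a ^ n} := by
    ext p
    simp [larssonCantor, larssonLevel]
  rw [this]
  refine isClosed_iInter fun n => (larssonWord_finite n).isClosed_biUnion fun w _ => ?_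
  have h := (larssonLeft_continuous a b w).comp
    (continuous_fst : Continuous (Prod.fst : (LarssonWord → ℝ) × ℝ → _))
  exact (isClosed_le h continuous_snd).inter
    (isClosed_le continuous_snd (h.add continuous_const))

lemma larssonCantor_sub (a b : ℝ) (u : LarssonWord → ℝ) :
    larssonCantor a b u ⊆ Set.Icc 0 1 := by
  intro x hx
  have h := Set.mem_iInter.1 hx 0
  simpa [larssonLevel, larssonLeft] using h

/-- The difference set as a function of the joint family. -/
def larssonDiff (a b : ℝ) (u : Bool × LarssonWord → ℝ) : Set ℝ :=
  {d : ℝ | ∃ p ∈ larssonCantor a b (fun w => u (false, w)),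
               ∃ q ∈ larssonCantor a b (fun w => u (true, w)), d = q - p}

/-- The set of families whose difference set contains an interval. -/
def larssonGood (a b : ℝ) : Set (Bool × LarssonWord → ℝ) :=
  {u | ∃ x y : ℝ, x < y ∧ Set.Ioo x y ⊆ larssonDiff a b u}

lemma larssonDiff_closed (a b d : ℝ) : IsClosed {u | d ∈ larssonDiff a b u} := by
  let S : Set ((Bool × LarssonWord → ℝ) × Set.Icc (0 : ℝ) 1) :=
    {p | (p.2 : ℝ) ∈ larssonCantor a b (fun w => p.1 (false, w)) ∧
      (p.2 : ℝ) + d ∈ larssonCantor a b (fun w => p.1 (true, w))}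
  have hS : IsClosed S := by
    refine IsClosed.inter ?_ ?_
    · have hc : Continuous (fun p : (Bool × LarssonWord → ℝ) × Set.Icc (0 : ℝ) 1 =>
        ((fun w => p.1 (false, w), (p.2 : ℝ)) : (LarssonWord → ℝ) × ℝ)) := by fun_prop
      exact (larssonCantor_closed a b).preimage hc
    · have hc : Continuous (fun p : (Bool × LarssonWord → ℝ) × Set.Icc (0 : ℝ) 1 =>
        ((fun w => p.1 (true, w), (p.2 : ℝ) + d) : (LarssonWord → ℝ) × ℝ)) := by fun_prop
      exact (larssonCantor_closed a b).preimage hc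
  have : {u | d ∈ larssonDiff a b u} = Prod.fst '' S := by
    ext u
    constructor
    · rintro ⟨p, hp, q, hq, rfl⟩
      exact ⟨(u, ⟨p, larssonCantor_sub a b _ hp⟩), ⟨hp, by simpa using hq⟩, rfl⟩
    · rintro ⟨⟨v, x⟩, ⟨h1, h2⟩, rfl⟩
      exact ⟨x, h1, x + d, h2, by ring⟩
  rw [this]
  exact isClosedMap_fst_of_compactSpace _ hS

lemma larssonGood_measurable (a b : ℝ) : MeasurableSet (larssonGood a b) := by
  have : larssonGood a b = ⋃ (x : ℚ) (y : ℚ) (_ : x < y),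
      ⋂ d ∈ Set.Ioo (x : ℝ) (y : ℝ), {u | d ∈ larssonDiff a b u} := by
    ext u
    simp only [Set.mem_iUnion, Set.mem_iInter]
    constructor
    · rintro ⟨x, y, hxy, h⟩
      obtain ⟨r, hr1, hr2⟩ := exists_rat_btwn hxy
      obtain ⟨s, hs1, hs2⟩ := exists_rat_btwn hr2
      exact ⟨r, s, by exact_mod_cast hs1, fun d hd => h ⟨hr1.trans hd.1, hd.2.trans hs2⟩⟩
    · rintro ⟨x, y, hxy, h⟩
      exact ⟨x, y, by exact_mod_cast hxy, fun d hd => h d hd⟩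
  rw [this]
  refine MeasurableSet.iUnion fun x => MeasurableSet.iUnion fun y => MeasurableSet.iUnion fun _ => ?_
  exact (isClosed_biInter fun d _ => larssonDiff_closed a b d).measurableSet

lemma larssonLeft_append (a b : ℝ) (u : LarssonWord → ℝ) (i : Fin 2) (w : LarssonWord) :
    larssonLeft a b u (w ++ [i]) =
      larssonLeft a b u [i] + a * larssonLeft a b (fun v => u (v ++ [i])) w := by
  induction w with
  | nil => simp [larssonLeft]
  | cons j w ih =>
    have e : larssonLeft a b (fun v => u (v ++ [i])) (j :: w) =
      larssonLeft a b (fun v => u (v ++ [i])) w + a ^ w.length *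
        ((if j = 0 then b else 1 / 2 + a / 2) + u (j :: (w ++ [i]))) := rfl
    rw [List.cons_append, larssonLeft, ih, e]
    simp only [List.length_append, List.length_singleton]
    ring

lemma larssonCantor_scale (a b : ℝ) (ha : 1 / 4 < a) (hb : 0 < b) (hab : 3 * a + 2 * b < 1)
    (u : LarssonWord → ℝ) (i : Fin 2)
    (hu : u [i] ∈ Set.Icc 0 ((1 - 3 * a - 2 * b) / 2)) (x : ℝ)
    (hx : x ∈ larssonCantor a b (fun v => u (v ++ [i]))) :
    larssonLeft a b u [i] + a * x ∈ larssonCantor a b u := by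
  obtain ⟨h0, h1⟩ := larssonCantor_sub a b _ hx
  refine Set.mem_iInter.2 fun n => ?_
  cases n with
  | zero =>
    have k0 : 0 ≤ a * x := by positivity
    have k1 : a * x ≤ a := by nlinarith
    obtain ⟨hu0, hu1⟩ := hu
    simp only [larssonLevel, larssonLeft, Set.mem_ofPred_eq, Set.mem_iUnion, List.length_eq_zero_iff,
      Set.mem_Icc, exists_prop, exists_eq_left, List.length_nil, pow_zero]
    split_ifs <;> constructor <;> linarith
  | succ n =>
    have h := Set.mem_iInter.1 hx n
    simp only [larssonLevel, Set.mem_iUnion, Set.mem_ofPred_eq, exists_prop, Set.mem_Icc] at h ⊢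
    obtain ⟨w, hw, l, r⟩ := h
    refine ⟨w ++ [i], by simp [hw], ?_, ?_⟩
    · rw [larssonLeft_append]
      nlinarith
    · rw [larssonLeft_append, pow_succ]
      nlinarith

/-- Restriction of the joint family to the subtrees rooted at `[i]`. -/
def larssonShift (i : Fin 2) (u : Bool × LarssonWord → ℝ) : Bool × LarssonWord → ℝ :=
  fun p => u (p.1, p.2 ++ [i])

lemma larssonGood_shift (a b : ℝ) (ha : 1 / 4 < a) (hb : 0 < b) (hab : 3 * a + 2 * b < 1)
    (u : Bool × LarssonWord → ℝ) (i : Fin 2)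
    (hu : ∀ p, u p ∈ Set.Icc 0 ((1 - 3 * a - 2 * b) / 2))
    (h : larssonShift i u ∈ larssonGood a b) : u ∈ larssonGood a b := by
  obtain ⟨x, y, hxy, h⟩ := h
  have ha0 : 0 < a := by linarith
  set c := larssonLeft a b (fun w => u (true, w)) [i] - larssonLeft a b (fun w => u (false, w)) [i]
    with hc
  refine ⟨c + a * x, c + a * y, by nlinarith, fun d hd => ?_⟩
  have hd' : (d - c) / a ∈ Set.Ioo x y := by
    refine ⟨?_, ?_⟩
    · rw [lt_div_iff₀ ha0]; linarith [hd.1]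
    · rw [div_lt_iff₀ ha0]; linarith [hd.2]
  obtain ⟨p, hp, q, hq, e⟩ := h hd'
  refine ⟨_, larssonCantor_scale a b ha hb hab (fun w => u (false, w)) i (hu _) p hp,
    _, larssonCantor_scale a b ha hb hab (fun w => u (true, w)) i (hu _) q hq, ?_⟩
  rw [div_eq_iff ha0.ne'] at e
  linear_combination e + hc

/-- The probability that the algebraic difference `C₂ − C₁` of two independent copies of
Larsson's random Cantor set contains a nonempty open interval equals 0 or 1. -/
theorem larsson_difference_zero_one_law
    (a b : ℝ) (ha : 1 / 4 < a) (hb : 0 < b) (hab : 3 * a + 2 * b < 1)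
    {Ω : Type*} [MeasurableSpace Ω] (P : Measure Ω) [IsProbabilityMeasure P]
    (U : Bool × LarssonWord → Ω → ℝ)
    (hUmeas : ∀ p, Measurable (U p))
    (hUlaw : ∀ p, P.map (U p) =
      (ENNReal.ofReal ((1 - 3 * a - 2 * b) / 2))⁻¹ •
        volume.restrict (Set.Icc 0 ((1 - 3 * a - 2 * b) / 2)))
    (hUindep : iIndepFun U P) :
    P {ω | ∃ x y : ℝ, x < y ∧ Set.Ioo x y ⊆
      {d : ℝ | ∃ p ∈ larssonCantor a b (fun w => U (false, w) ω),
               ∃ q ∈ larssonCantor a b (fun w => U (true, w) ω), d = q - p}} = 0 ∨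
    P {ω | ∃ x y : ℝ, x < y ∧ Set.Ioo x y ⊆
      {d : ℝ | ∃ p ∈ larssonCantor a b (fun w => U (false, w) ω),
               ∃ q ∈ larssonCantor a b (fun w => U (true, w) ω), d = q - p}} = 1 := by
  classical
  set t := (1 - 3 * a - 2 * b) / 2 with ht
  set V : Ω → Bool × LarssonWord → ℝ := fun ω p => U p ω with hV
  have hVm : Measurable V := measurable_pi_lambda _ hUmeas
  change P (V ⁻¹' larssonGood a b) = 0 ∨ P (V ⁻¹' larssonGood a b) = 1
  have hG := larssonGood_measurable a b
  have hshm : ∀ i, Measurable (larssonShift i) := fun i =>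
    measurable_pi_lambda _ fun p => measurable_pi_apply _
  -- almost surely all variables are in range
  have hrange : ∀ᵐ ω ∂P, ∀ p, V ω p ∈ Set.Icc 0 t := by
    rw [ae_all_iff]
    intro p
    refine ae_of_ae_map (hUmeas p).aemeasurable ?_
    rw [hUlaw p]
    exact Measure.ae_smul_measure (ae_restrict_mem measurableSet_Icc) _
  -- the shifted family has the same law
  have hinj : ∀ i : Fin 2, Function.Injective
      (fun p : Bool × LarssonWord => (p.1, p.2 ++ [i])) := by
    rintro i ⟨p, w⟩ ⟨q, v⟩ h
    simpa using h
  have hlaw : ∀ i, P.map (fun ω => larssonShift i (V ω)) = P.map V := by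
    intro i
    have h1 := (iIndepFun_iff_map_fun_eq_infinitePi_map hUmeas).1 hUindep
    have h2 := (iIndepFun_iff_map_fun_eq_infinitePi_map
      (fun p : Bool × LarssonWord => hUmeas (p.1, p.2 ++ [i]))).1 (hUindep.precomp (hinj i))
    simp only [hUlaw] at h1 h2
    exact h2.trans h1.symm
  set A : Fin 2 → Set Ω := fun i => (fun ω => larssonShift i (V ω)) ⁻¹' larssonGood a b with hA
  have hAm : ∀ i, MeasurableSet (A i) := fun i => ((hshm i).comp hVm) hG
  have hPA : ∀ i, P (A i) = P (V ⁻¹' larssonGood a b) := by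
    intro i
    rw [← Measure.map_apply hVm hG, ← hlaw i]
    exact (Measure.map_apply ((hshm i).comp hVm) hG).symm
  have hle : P (A 0 ∪ A 1) ≤ P (V ⁻¹' larssonGood a b) := by
    refine measure_mono_ae ?_
    filter_upwards [hrange] with ω hω h
    rcases h with h | h
    · exact larssonGood_shift a b ha hb hab _ 0 hω h
    · exact larssonGood_shift a b ha hb hab _ 1 hω h
  -- independence
  have hind : P (A 0 ∩ A 1) = P (A 0) * P (A 1) := by
    let T : Fin 2 → Set (Bool × LarssonWord) := fun i =>
      Set.range (fun p : Bool × LarssonWord => (p.1, p.2 ++ [i]))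
    have hT : Disjoint (T 0) (T 1) := by
      rw [Set.disjoint_left]
      rintro _ ⟨⟨p, w⟩, rfl⟩ ⟨⟨q, v⟩, h⟩
      simp at h
    have hI := indep_iSup_of_disjoint (fun p => (hUmeas p).comap_le) hUindep hT
    have hmeas : ∀ i, MeasurableSet[⨆ p ∈ T i, MeasurableSpace.comap (U p) inferInstance] (A i) := by
      intro i
      have : Measurable[⨆ p ∈ T i, MeasurableSpace.comap (U p) inferInstance]
          (fun ω => larssonShift i (V ω)) := by
        refine @measurable_pi_lambda _ _ _ (_) _ _ fun p => ?_
        refine Measurable.mono (comap_measurable (U (p.1, p.2 ++ [i]))) ?_ le_rfl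
        exact le_iSup₂_of_le (p.1, p.2 ++ [i]) ⟨p, rfl⟩ le_rfl
      exact this hG
    exact (Indep_iff _ _ P).1 hI _ _ (hmeas 0) (hmeas 1)
  have hu := measure_union_add_inter (μ := P) (A 0) (hAm 1)
  rw [hind, hPA, hPA] at hu
  rw [← hPA 0] at hu hle ⊢
  have f1 : P (A 0) ≠ ⊤ := measure_ne_top _ _
  have f2 : P (A 0 ∪ A 1) ≠ ⊤ := measure_ne_top _ _
  have g1 : P (A 0) ≤ 1 := prob_le_one
  generalize P (A 0) = p at *
  generalize P (A 0 ∪ A 1) = q at *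
  lift p to NNReal using f1
  lift q to NNReal using f2
  norm_cast at *
  have hu' : (q : ℝ) + p * p = p + p := by exact_mod_cast hu
  have hle' : (q : ℝ) ≤ p := by exact_mod_cast hle
  have g1' : (p : ℝ) ≤ 1 := by exact_mod_cast g1
  have hp0 : (0 : ℝ) ≤ p := p.2
  have : (p : ℝ) * (p - 1) = 0 := by nlinarith
  rcases mul_eq_zero.1 this with h | h
  · left; exact_mod_cast h
  · right
    have : (p : ℝ) = 1 := by linarith
    exact_mod_cast this
end

section
/- (Main Lemma) There exist a real ρ > 1, positive reals δ, q, K and an N ∈ ℕ such that for every n ≥ N and every x ∈ [−K, K], the probability that both Z_n^x([−K,0]) > δ·ρ^n and Z_n^x([0,K]) > δ·ρ^n is at least q. -/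
open MeasureTheory ProbabilityTheory

/-- `Z_n^x(A)`: the number of pairs `(i, j)` of level-`n` words such that
`Φ(Q_{(i,j)}, x) = (u − v + x)/a^n ∈ A`, where `u` (resp. `v`) is the left endpoint of the
level-`n` interval of `C₁` (resp. `C₂`) indexed by `i` (resp. `j`). -/
noncomputable def larssonZ (a b : ℝ) (u₁ u₂ : LarssonWord → ℝ) (n : ℕ) (x : ℝ)
    (A : Set ℝ) : ℕ :=
  Nat.card {p : LarssonWord × LarssonWord //
    p.1.length = n ∧ p.2.length = n ∧
    (larssonLeft a b u₁ p.1 - larssonLeft a b u₂ p.2 + x) / a ^ n ∈ A}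


lemma lw_pz {Ω ι : Type*} [MeasurableSpace Ω] (P : Measure Ω) [IsProbabilityMeasure P]
    [Fintype ι] (E : ι → Set Ω) (hE : ∀ i, MeasurableSet (E i)) (c C M : ℝ)
    (hc : 0 < c) (hC : 0 < C) (hM : 0 < M)
    (h1 : c * M ≤ ∑ i, P.real (E i))
    (h2 : ∑ i, ∑ j, P.real (E i ∩ E j) ≤ C * M ^ 2) :
    c ^ 2 / (4 * C) ≤ P.real {ω | c * M / 2 < ∑ i, (E i).indicator (fun _ => (1 : ℝ)) ω} := by
  set Z : Ω → ℝ := fun ω => ∑ i, (E i).indicator (fun _ => (1 : ℝ)) ω with hZ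
  have hind : ∀ S : Set Ω, MeasurableSet S → Integrable (S.indicator (fun _ => (1 : ℝ))) P :=
    fun S hS => (integrable_const 1).indicator hS
  have hZm : Measurable Z := by
    apply Finset.measurable_sum
    intro i _
    exact measurable_const.indicator (hE i)
  set G : Set Ω := {ω | c * M / 2 < Z ω} with hG
  have hGm : MeasurableSet G := measurableSet_lt measurable_const hZm
  have eZ : ∫ ω, Z ω ∂P = ∑ i, P.real (E i) := by
    rw [hZ, integral_finsetSum _ (fun i _ => hind _ (hE i))]
    refine Finset.sum_congr rfl fun i _ => ?_
    rw [integral_indicator_const _ (hE i)]; simp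
  have hsq : ∀ ω, Z ω ^ 2 = ∑ i, ∑ j, (E i ∩ E j).indicator (fun _ => (1 : ℝ)) ω := by
    intro ω
    rw [sq, hZ, Finset.sum_mul_sum]
    refine Finset.sum_congr rfl fun i _ => Finset.sum_congr rfl fun j _ => ?_
    by_cases h1 : ω ∈ E i <;> by_cases h2 : ω ∈ E j <;> simp [h1, h2]
  have iZ : Integrable Z P := integrable_finsetSum _ (fun i _ => hind _ (hE i))
  have iZ2 : Integrable (fun ω => Z ω ^ 2) P := by
    simp_rw [hsq]
    exact integrable_finsetSum _ (fun i _ => integrable_finsetSum _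
      (fun j _ => hind _ ((hE i).inter (hE j))))
  have eZ2 : ∫ ω, Z ω ^ 2 ∂P = ∑ i, ∑ j, P.real (E i ∩ E j) := by
    simp_rw [hsq]
    rw [integral_finsetSum _ (fun i _ => integrable_finsetSum _
      (fun j _ => hind _ ((hE i).inter (hE j))))]
    refine Finset.sum_congr rfl fun i _ => ?_
    rw [integral_finsetSum _ (fun j _ => hind _ ((hE i).inter (hE j)))]
    refine Finset.sum_congr rfl fun j _ => ?_
    rw [integral_indicator_const _ ((hE i).inter (hE j))]; simp
  set l : ℝ := c / (2 * C * M) with hl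
  have hlpos : 0 < l := by positivity
  have key : ∀ ω, Z ω ≤ c * M / 2 + (l / 2 * Z ω ^ 2 +
      (1 / (2 * l)) * G.indicator (fun _ => (1 : ℝ)) ω) := by
    intro ω
    by_cases h : ω ∈ G
    · simp only [h, Set.indicator_of_mem]
      have : 0 ≤ (l * Z ω - 1) ^ 2 / (2 * l) := by positivity
      have e : (l * Z ω - 1) ^ 2 / (2 * l) = l / 2 * Z ω ^ 2 - Z ω + 1 / (2 * l) * 1 := by
        field_simp; ring
      have : 0 < c * M := by positivity
      linarith
    · simp only [h, not_false_eq_true, Set.indicator_of_notMem]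
      have h' : Z ω ≤ c * M / 2 := by simpa [hG] using h
      have : 0 ≤ l / 2 * Z ω ^ 2 := by positivity
      linarith
  have iS : Integrable (fun ω => l / 2 * Z ω ^ 2 +
      (1 / (2 * l)) * G.indicator (fun _ => (1 : ℝ)) ω) P :=
    (iZ2.const_mul (l / 2)).add ((hind G hGm).const_mul (1 / (2 * l)))
  have I := integral_mono iZ ((integrable_const (c * M / 2)).add iS) key
  simp only [Pi.add_apply] at I
  rw [integral_add (integrable_const _) iS, integral_add (iZ2.const_mul (l / 2))
    ((hind G hGm).const_mul (1 / (2 * l))), integral_const_mul, integral_const_mul,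
    integral_indicator_const _ hGm, eZ, eZ2] at I
  simp only [integral_const, probReal_univ, smul_eq_mul, one_mul, mul_one] at I
  have h3 : l / 2 * ∑ i, ∑ j, P.real (E i ∩ E j) ≤ l / 2 * (C * M ^ 2) := by gcongr
  have e3 : l / 2 * (C * M ^ 2) = c * M / 4 := by rw [hl]; field_simp; norm_num
  have e4 : 1 / (2 * l) = C * M / c := by rw [hl]; field_simp
  rw [e4] at I
  have h4 : c * M / 4 ≤ C * M / c * P.real G := by linarith
  have e5 : C * M / c * (c ^ 2 / (4 * C)) = c * M / 4 := by field_simp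
  rw [← e5] at h4
  exact le_of_mul_le_mul_left h4 (by positivity)

lemma lw_fub {Ω β : Type*} [MeasurableSpace Ω] [MeasurableSpace β] (P : Measure Ω)
    [IsProbabilityMeasure P] (Y : Ω → β) (V : Ω → ℝ) (hY : Measurable Y) (hV : Measurable V)
    (ind : IndepFun Y V P) (S : Set (β × ℝ)) (hS : MeasurableSet S) :
    P {ω | (Y ω, V ω) ∈ S} = ∫⁻ y, (P.map V) (Prod.mk y ⁻¹' S) ∂(P.map Y) := by
  have h := (indepFun_iff_map_prod_eq_prod_map_map hY.aemeasurable hV.aemeasurable).1 ind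
  have : P {ω | (Y ω, V ω) ∈ S} = (P.map (fun ω => (Y ω, V ω))) S := by
    rw [Measure.map_apply (hY.prodMk hV) hS]; rfl
  have := Measure.isProbabilityMeasure_map (μ := P) hV.aemeasurable
  rw [‹P {ω | (Y ω, V ω) ∈ S} = _›, h, Measure.prod_apply hS]

lemma lw_upper {Ω β : Type*} [MeasurableSpace Ω] [MeasurableSpace β] (P : Measure Ω)
    [IsProbabilityMeasure P] (Y : Ω → β) (V : Ω → ℝ) (hY : Measurable Y) (hV : Measurable V)
    (ind : IndepFun Y V P) (S : Set (β × ℝ)) (hS : MeasurableSet S) (G : Set β)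
    (hG : MeasurableSet G) (k : ENNReal)
    (h1 : ∀ y u, (y, u) ∈ S → y ∈ G) (h2 : ∀ y, (P.map V) (Prod.mk y ⁻¹' S) ≤ k) :
    P {ω | (Y ω, V ω) ∈ S} ≤ k * P {ω | Y ω ∈ G} := by
  rw [lw_fub P Y V hY hV ind S hS]
  calc _ ≤ ∫⁻ y, G.indicator (fun _ => k) y ∂(P.map Y) := by
        apply lintegral_mono
        intro y
        by_cases h : y ∈ G
        · simpa [h] using h2 y
        · have : Prod.mk y ⁻¹' S = ∅ := by
            ext u; simp; exact fun hu => h (h1 y u hu)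
          simp [this]
    _ = _ := by
        rw [lintegral_indicator_const hG, Measure.map_apply hY hG]; rfl

lemma lw_lower {Ω β : Type*} [MeasurableSpace Ω] [MeasurableSpace β] (P : Measure Ω)
    [IsProbabilityMeasure P] (Y : Ω → β) (V : Ω → ℝ) (hY : Measurable Y) (hV : Measurable V)
    (ind : IndepFun Y V P) (S : Set (β × ℝ)) (hS : MeasurableSet S) (G : Set β)
    (hG : MeasurableSet G) (k : ENNReal)
    (h2 : ∀ y ∈ G, k ≤ (P.map V) (Prod.mk y ⁻¹' S)) :
    k * P {ω | Y ω ∈ G} ≤ P {ω | (Y ω, V ω) ∈ S} := by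
  rw [lw_fub P Y V hY hV ind S hS]
  calc _ = ∫⁻ y, G.indicator (fun _ => k) y ∂(P.map Y) := by
        rw [lintegral_indicator_const hG, Measure.map_apply hY hG]; rfl
    _ ≤ _ := by
        apply lintegral_mono
        intro y
        by_cases h : y ∈ G
        · simpa [h] using h2 y h
        · simp [h]

/-- uniform law bounds -/
lemma lw_law_le (t : ℝ) (ht : 0 < t) (s : Set ℝ) (L : ℝ)
    (h : ∀ u ∈ s, ∀ u' ∈ s, |u - u'| ≤ L) :
    ((ENNReal.ofReal t)⁻¹ • volume.restrict (Set.Icc 0 t)) s ≤ ENNReal.ofReal (L / t) := by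
  rw [Measure.smul_apply, smul_eq_mul, div_eq_inv_mul, ENNReal.ofReal_mul (by positivity),
    ENNReal.ofReal_inv_of_pos ht]
  gcongr
  calc _ ≤ volume s := Measure.restrict_apply_le _ _
    _ ≤ Metric.ediam s := Real.volume_le_diam s
    _ ≤ _ := by
      apply Metric.ediam_le
      intro x hx y hy
      rw [edist_dist, Real.dist_eq]
      exact ENNReal.ofReal_le_ofReal (h x hx y hy)

lemma lw_law_ge (t : ℝ) (ht : 0 < t) (s : Set ℝ) (p q : ℝ) (hp : 0 ≤ p) (hq : q ≤ t)
    (h : Set.Icc p q ⊆ s) :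
    ENNReal.ofReal ((q - p) / t) ≤
      ((ENNReal.ofReal t)⁻¹ • volume.restrict (Set.Icc 0 t)) s := by
  rw [Measure.smul_apply, smul_eq_mul, div_eq_inv_mul, ENNReal.ofReal_mul (by positivity),
    ENNReal.ofReal_inv_of_pos ht]
  gcongr
  rw [← Real.volume_Icc]
  calc volume (Set.Icc p q) = volume.restrict (Set.Icc 0 t) (Set.Icc p q) := by
        rw [Measure.restrict_apply measurableSet_Icc, Set.inter_eq_left.2]
        exact Set.Icc_subset_Icc hp hq
    _ ≤ _ := measure_mono h

/-! deterministic facts -/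
lemma lw_left_congr (a b : ℝ) (u u' : LarssonWord → ℝ) (w : LarssonWord)
    (h : ∀ s, s ≠ [] → s <:+ w → u s = u' s) : larssonLeft a b u w = larssonLeft a b u' w := by
  induction w with
  | nil => rfl
  | cons i w ih =>
    rw [larssonLeft, larssonLeft, ih (fun s hs hw => h s hs (hw.trans (List.suffix_cons i w))),
      h (i :: w) (by simp) (List.suffix_refl _)]

lemma lw_left_update_not (a b : ℝ) (u : LarssonWord → ℝ) (w q : LarssonWord) (y : ℝ)
    (h : ¬ q <:+ w) : larssonLeft a b (Function.update u q y) w = larssonLeft a b u w := by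
  apply lw_left_congr
  intro s _ hs
  rw [Function.update_of_ne]
  rintro rfl; exact h hs

lemma lw_left_update (a b : ℝ) (u : LarssonWord → ℝ) (p s : LarssonWord) (i : Fin 2) :
    larssonLeft a b u (p ++ i :: s) =
      larssonLeft a b (Function.update u (i :: s) 0) (p ++ i :: s) +
        a ^ s.length * u (i :: s) := by
  induction p with
  | nil =>
    simp only [List.nil_append]
    rw [larssonLeft, larssonLeft, lw_left_update_not, Function.update_self]
    · ring
    · intro h; simpa using h.length_le
  | cons j p ih =>
    simp only [List.cons_append]
    rw [larssonLeft, larssonLeft, ih, Function.update_of_ne]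
    · ring
    · intro h
      have := congrArg List.length h
      simp at this
      omega

lemma lw_left_meas {Ω : Type*} (m : MeasurableSpace Ω) (a b : ℝ) (V : LarssonWord → Ω → ℝ)
    (hV : ∀ s, Measurable[m] (V s)) (w : LarssonWord) :
    Measurable[m] (fun ω => larssonLeft a b (fun s => V s ω) w) := by
  induction w with
  | nil => simp only [larssonLeft]; exact measurable_const
  | cons i w ih =>
    simp only [larssonLeft]
    exact ih.add (((hV _).const_add _).const_mul _)

lemma lw_bound1 (a b t : ℝ) (ha : 0 < a) (ha1 : a < 1) (u u' : LarssonWord → ℝ)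
    (hu : ∀ s, u s ∈ Set.Icc 0 t) (hu' : ∀ s, u' s ∈ Set.Icc 0 t) (r : Fin 2)
    (hr : u [r] = 0) (hr' : u' [r] = 0) (p : LarssonWord) :
    |larssonLeft a b u (p ++ [r]) - larssonLeft a b u' (p ++ [r])| ≤
      t * (a - a ^ (p.length + 1)) / (1 - a) := by
  induction p with
  | nil => simp [larssonLeft, hr, hr']
  | cons i p ih =>
    simp only [List.cons_append, larssonLeft, List.length_append, List.length_cons,
      List.length_nil]
    have e : t * (a - a ^ (p.length + 1 + 1)) / (1 - a) =
      t * (a - a ^ (p.length + 1)) / (1 - a) + a ^ (p.length + 1) * t := by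
      have : 1 - a ≠ 0 := by linarith
      field_simp; ring
    rw [e]
    have h1 : |u (i :: (p ++ [r])) - u' (i :: (p ++ [r]))| ≤ t := by
      have := hu (i :: (p ++ [r])); have := hu' (i :: (p ++ [r]))
      simp only [Set.mem_Icc] at *
      rw [abs_le]; constructor <;> linarith
    have h2 : |a ^ (p.length + 1) * (u (i :: (p ++ [r])) - u' (i :: (p ++ [r])))| ≤
        a ^ (p.length + 1) * t := by
      rw [abs_mul, abs_of_pos (by positivity)]; gcongr
    calc _ = |(larssonLeft a b u (p ++ [r]) - larssonLeft a b u' (p ++ [r])) +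
          a ^ (p.length + 1) * (u (i :: (p ++ [r])) - u' (i :: (p ++ [r])))| := by
          congr 1; simp only [zero_add]; ring
      _ ≤ _ := (abs_add_le _ _).trans (add_le_add ih h2)

lemma lw_bound2 (a b t : ℝ) (ha : 0 < a) (ha1 : a < 1) (hb : 0 < b)
    (ht : t = (1 - 3 * a - 2 * b) / 2) (u u' : LarssonWord → ℝ)
    (hu : ∀ s, u s ∈ Set.Icc 0 t) (hu' : ∀ s, u' s ∈ Set.Icc 0 t) (v : LarssonWord)
    (w w' : LarssonWord) (hw : w.length = w'.length) :
    |larssonLeft a b u (w ++ v) - larssonLeft a b u' (w' ++ v)| ≤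
      |larssonLeft a b u v - larssonLeft a b u' v| +
      a ^ v.length * (1 - a ^ w.length) / (1 - a) := by
  induction w generalizing w' with
  | nil =>
    have : w' = [] := List.length_eq_zero_iff.1 hw.symm
    subst this; simp
  | cons i w ih =>
    cases w' with
    | nil => simp at hw
    | cons j w' =>
      have hw2 : w.length = w'.length := by simpa using hw
      have ih := ih w' hw2
      simp only [List.cons_append, larssonLeft, List.length_append, List.length_cons, ← hw2]
      have h1 := hu (i :: (w ++ v))
      have h1' := hu' (j :: (w' ++ v))
      set A := u (i :: (w ++ v))
      set B := u' (j :: (w' ++ v))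
      simp only [Set.mem_Icc] at h1 h1'
      set ci : ℝ := if i = 0 then b else 1 / 2 + a / 2 with hci
      set cj : ℝ := if j = 0 then b else 1 / 2 + a / 2 with hcj
      have hc : |(ci + A) - (cj + B)| ≤ 1 := by
        rw [abs_le, hci, hcj]
        split_ifs <;> constructor <;> linarith
      have h2 : |a ^ (w.length + v.length) * ((ci + A) - (cj + B))| ≤
          a ^ (w.length + v.length) := by
        rw [abs_mul, abs_of_pos (by positivity)]
        exact mul_le_of_le_one_right (by positivity) hc
      have e : a ^ v.length * (1 - a ^ (w.length + 1)) / (1 - a) =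
        a ^ v.length * (1 - a ^ w.length) / (1 - a) + a ^ (w.length + v.length) := by
        have : 1 - a ≠ 0 := by linarith
        field_simp; ring
      rw [e, ← add_assoc]
      calc _ = |(larssonLeft a b u (w ++ v) - larssonLeft a b u' (w' ++ v)) +
            a ^ (w.length + v.length) * ((ci + A) - (cj + B))| := by congr 1; ring
        _ ≤ _ := (abs_add_le _ _).trans (add_le_add ih h2)


@[reducible]
def lwSig {Ω : Type*} (U : Bool × LarssonWord → Ω → ℝ) (T : Set (Bool × LarssonWord)) :
    MeasurableSpace Ω :=
  ⨆ p ∈ T, MeasurableSpace.comap (U p) inferInstance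

lemma lw_sig_meas {Ω : Type*} (U : Bool × LarssonWord → Ω → ℝ) (T : Set (Bool × LarssonWord))
    (p) (hp : p ∈ T) : Measurable[lwSig U T] (U p) := by
  have h : MeasurableSpace.comap (U p) inferInstance ≤ lwSig U T :=
    le_iSup₂_of_le (f := fun p (_ : p ∈ T) => MeasurableSpace.comap (U p) inferInstance)
      p hp le_rfl
  exact measurable_iff_comap_le.2 h

lemma lw_sig_le {Ω : Type*} [m : MeasurableSpace Ω] (U : Bool × LarssonWord → Ω → ℝ)
    (hU : ∀ p, Measurable (U p)) (T : Set (Bool × LarssonWord)) : lwSig U T ≤ m :=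
  iSup₂_le fun p _ => measurable_iff_comap_le.1 (hU p)

lemma lw_sig_indep {Ω : Type*} [MeasurableSpace Ω] (P : Measure Ω)
    (U : Bool × LarssonWord → Ω → ℝ)
    (hU : ∀ p, Measurable (U p)) (hind : iIndepFun U P) (S T : Set (Bool × LarssonWord))
    (hST : Disjoint S T) : Indep (lwSig U S) (lwSig U T) P :=
  indep_iSup_of_disjoint (fun p => measurable_iff_comap_le.1 (hU p)) hind hST

lemma lw_indepFun {Ω β : Type*} [MeasurableSpace Ω] [MeasurableSpace β] (P : Measure Ω)
    (U : Bool × LarssonWord → Ω → ℝ)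
    (hU : ∀ p, Measurable (U p)) (hind : iIndepFun U P) (q : Bool × LarssonWord)
    (Y : Ω → β) (hY : Measurable[lwSig U {q}ᶜ] Y) : IndepFun Y (U q) P := by
  have h := lw_sig_indep P U hU hind {q}ᶜ {q} disjoint_compl_left
  rw [IndepFun_iff_Indep]
  refine indep_of_indep_of_le_left (indep_of_indep_of_le_right h ?_) ?_
  · exact measurable_iff_comap_le.1 (lw_sig_meas U {q} q rfl)
  · exact measurable_iff_comap_le.1 hY

noncomputable def lwX {Ω : Type*} (a b : ℝ) (U : Bool × LarssonWord → Ω → ℝ) (x : ℝ)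
    (i j : LarssonWord) (ω : Ω) : ℝ :=
  larssonLeft a b (fun w => U (false, w) ω) i - larssonLeft a b (fun w => U (true, w) ω) j + x

noncomputable def lwZero {Ω : Type*} (U : Bool × LarssonWord → Ω → ℝ) (q : Bool × LarssonWord) :
    Bool × LarssonWord → Ω → ℝ := fun p ω => if p = q then 0 else U p ω

lemma lw_X_meas {Ω : Type*} (m : MeasurableSpace Ω) (a b : ℝ) (U : Bool × LarssonWord → Ω → ℝ)
    (hU : ∀ p, Measurable[m] (U p)) (x : ℝ) (i j : LarssonWord) :
    Measurable[m] (lwX a b U x i j) :=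
  ((lw_left_meas m a b (fun w => U (false, w)) (fun _ => hU _) i).sub
    (lw_left_meas m a b (fun w => U (true, w)) (fun _ => hU _) j)).add_const x

lemma lw_zero_meas {Ω : Type*} (U : Bool × LarssonWord → Ω → ℝ) (q : Bool × LarssonWord)
    (T : Set (Bool × LarssonWord)) (hT : ∀ p, p ≠ q → p ∈ T ∨ U p = 0) (p) :
    Measurable[lwSig U T] (lwZero U q p) := by
  unfold lwZero
  by_cases h : p = q
  · simp only [h, if_true]; exact measurable_const
  · simp only [h, if_false]
    rcases hT p h with h | h
    · exact lw_sig_meas U T p h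
    · simp only [h]; exact measurable_const

lemma lw_zero_ff {Ω : Type*} (U : Bool × LarssonWord → Ω → ℝ) (q : LarssonWord) (e : Bool) (ω) :
    (fun w => lwZero U (e, q) (e, w) ω) = Function.update (fun w => U (e, w) ω) q 0 := by
  funext w
  by_cases h : w = q
  · subst h; simp [lwZero]
  · simp [lwZero, h]

lemma lw_zero_ft {Ω : Type*} (U : Bool × LarssonWord → Ω → ℝ) (q : LarssonWord) (e f : Bool)
    (h : f ≠ e) (ω) :
    (fun w => lwZero U (e, q) (f, w) ω) = (fun w => U (f, w) ω) := by
  funext w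
  simp [lwZero, h]

lemma lw_X_f {Ω : Type*} (a b : ℝ) (U : Bool × LarssonWord → Ω → ℝ) (x : ℝ)
    (p s j : LarssonWord) (c : Fin 2) (ω) :
    lwX a b U x (p ++ c :: s) j ω =
      lwX a b (lwZero U (false, c :: s)) x (p ++ c :: s) j ω +
        a ^ s.length * U (false, c :: s) ω := by
  unfold lwX
  rw [lw_zero_ff, lw_zero_ft _ _ _ _ (by simp), lw_left_update]; ring

lemma lw_X_t {Ω : Type*} (a b : ℝ) (U : Bool × LarssonWord → Ω → ℝ) (x : ℝ)
    (p s i : LarssonWord) (c : Fin 2) (ω) :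
    lwX a b U x i (p ++ c :: s) ω =
      lwX a b (lwZero U (true, c :: s)) x i (p ++ c :: s) ω +
        (-a ^ s.length) * U (true, c :: s) ω := by
  unfold lwX
  rw [lw_zero_ff, lw_zero_ft _ _ _ _ (by simp), lw_left_update]; ring

lemma lw_X_f_not {Ω : Type*} (a b : ℝ) (U : Bool × LarssonWord → Ω → ℝ) (x : ℝ)
    (q i j : LarssonWord) (h : ¬ q <:+ i) (ω) :
    lwX a b U x i j ω = lwX a b (lwZero U (false, q)) x i j ω := by
  unfold lwX
  rw [lw_zero_ff, lw_zero_ft _ _ _ _ (by simp), lw_left_update_not _ _ _ _ _ _ h]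

lemma lw_X_t_not {Ω : Type*} (a b : ℝ) (U : Bool × LarssonWord → Ω → ℝ) (x : ℝ)
    (q i j : LarssonWord) (h : ¬ q <:+ j) (ω) :
    lwX a b U x i j ω = lwX a b (lwZero U (true, q)) x i j ω := by
  unfold lwX
  rw [lw_zero_ff, lw_zero_ft _ _ _ _ (by simp), lw_left_update_not _ _ _ _ _ _ h]

/-- the basic event -/
def lwE {Ω : Type*} (a b : ℝ) (U : Bool × LarssonWord → Ω → ℝ) (x α β : ℝ)
    (i j : LarssonWord) : Set Ω := {ω | lwX a b U x i j ω ∈ Set.Icc α β}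

lemma lw_slice (c y α β : ℝ) (hc : c ≠ 0) (u u' : ℝ)
    (h : y + c * u ∈ Set.Icc α β) (h' : y + c * u' ∈ Set.Icc α β) :
    |u - u'| ≤ (β - α) / |c| := by
  rw [le_div_iff₀ (abs_pos.2 hc), ← abs_mul]
  simp only [Set.mem_Icc] at h h'
  rw [abs_le]; constructor <;> nlinarith

section
variable {Ω : Type*} [MeasurableSpace Ω] (P : Measure Ω) [IsProbabilityMeasure P]
    (U : Bool × LarssonWord → Ω → ℝ)

lemma lw_pair_gen (a b t x α β : ℝ) (ht : 0 < t)
    (hU : ∀ p, Measurable (U p))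
    (hlaw : ∀ p, P.map (U p) = (ENNReal.ofReal t)⁻¹ • volume.restrict (Set.Icc 0 t))
    (hind : iIndepFun U P) (q : Bool × LarssonWord) (c : ℝ) (hc : c ≠ 0)
    (i j i' j' : LarssonWord)
    (h1 : ∀ ω, lwX a b U x i j ω = lwX a b (lwZero U q) x i j ω)
    (h2 : ∀ ω, lwX a b U x i' j' ω = lwX a b (lwZero U q) x i' j' ω + c * U q ω) :
    P (lwE a b U x α β i j ∩ lwE a b U x α β i' j') ≤
      ENNReal.ofReal ((β - α) / |c| / t) * P (lwE a b U x α β i j) := by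
  set Y : Ω → ℝ × ℝ := fun ω => (lwX a b (lwZero U q) x i j ω, lwX a b (lwZero U q) x i' j' ω)
    with hY
  have hz : ∀ p, Measurable[lwSig U {q}ᶜ] (lwZero U q p) :=
    lw_zero_meas U q _ (fun p hp => Or.inl hp)
  have hYm : Measurable[lwSig U {q}ᶜ] Y :=
    (lw_X_meas _ a b _ hz x i j).prodMk (lw_X_meas _ a b _ hz x i' j')
  have hYm' : Measurable Y := hYm.mono (lw_sig_le U hU _) le_rfl
  have := lw_upper P Y (U q) hYm' (hU q) (lw_indepFun P U hU hind q Y hYm)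
    {z | z.1.1 ∈ Set.Icc α β ∧ z.1.2 + c * z.2 ∈ Set.Icc α β}
    (by
      apply MeasurableSet.inter
      · exact (measurable_fst.comp measurable_fst) measurableSet_Icc
      · exact ((measurable_snd.comp measurable_fst).add (measurable_snd.const_mul c))
          measurableSet_Icc)
    {y | y.1 ∈ Set.Icc α β} (measurable_fst measurableSet_Icc)
    (ENNReal.ofReal ((β - α) / |c| / t))
    (fun y u h => h.1)
    (by
      intro y
      rw [hlaw q]
      apply lw_law_le t ht
      intro u hu u' hu'
      exact lw_slice c y.2 α β hc u u' hu.2 hu'.2)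
  have e1 : lwE a b U x α β i j = {ω | Y ω ∈ {y : ℝ × ℝ | y.1 ∈ Set.Icc α β}} := by
    ext ω; simp only [lwE, h1]; rfl
  have e2 : lwE a b U x α β i j ∩ lwE a b U x α β i' j' = {ω | (Y ω, U q ω) ∈
      {z : (ℝ × ℝ) × ℝ | z.1.1 ∈ Set.Icc α β ∧ z.1.2 + c * z.2 ∈ Set.Icc α β}} := by
    ext ω; simp only [lwE, h1, h2]; rfl
  rw [e2, e1]; exact this

lemma lw_single_gen (a b t x α β : ℝ) (ht : 0 < t)
    (hU : ∀ p, Measurable (U p))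
    (hlaw : ∀ p, P.map (U p) = (ENNReal.ofReal t)⁻¹ • volume.restrict (Set.Icc 0 t))
    (hind : iIndepFun U P) (q : Bool × LarssonWord) (c : ℝ) (hc : c ≠ 0)
    (i' j' : LarssonWord)
    (h2 : ∀ ω, lwX a b U x i' j' ω = lwX a b (lwZero U q) x i' j' ω + c * U q ω) :
    P (lwE a b U x α β i' j') ≤ ENNReal.ofReal ((β - α) / |c| / t) := by
  set Y : Ω → ℝ := fun ω => lwX a b (lwZero U q) x i' j' ω with hY
  have hz : ∀ p, Measurable[lwSig U {q}ᶜ] (lwZero U q p) :=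
    lw_zero_meas U q _ (fun p hp => Or.inl hp)
  have hYm : Measurable[lwSig U {q}ᶜ] Y := lw_X_meas _ a b _ hz x i' j'
  have hYm' : Measurable Y := hYm.mono (lw_sig_le U hU _) le_rfl
  have := lw_upper P Y (U q) hYm' (hU q) (lw_indepFun P U hU hind q Y hYm)
    {z | z.1 + c * z.2 ∈ Set.Icc α β}
    ((measurable_fst.add (measurable_snd.const_mul c)) measurableSet_Icc)
    Set.univ MeasurableSet.univ
    (ENNReal.ofReal ((β - α) / |c| / t))
    (fun y u h => trivial)
    (by
      intro y
      rw [hlaw q]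
      apply lw_law_le t ht
      intro u hu u' hu'
      exact lw_slice c y α β hc u u' hu hu')
  have e2 : lwE a b U x α β i' j' = {ω | (Y ω, U q ω) ∈
      {z : ℝ × ℝ | z.1 + c * z.2 ∈ Set.Icc α β}} := by
    ext ω; simp only [lwE, h2]; rfl
  rw [e2]; refine this.trans ?_
  simp

lemma lw_single (a b t x α β : ℝ) (ht : 0 < t)
    (hU : ∀ p, Measurable (U p))
    (hlaw : ∀ p, P.map (U p) = (ENNReal.ofReal t)⁻¹ • volume.restrict (Set.Icc 0 t))
    (hind : iIndepFun U P) (i j : LarssonWord) (r : Fin 2) (hi : [r] <:+ i) :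
    P (lwE a b U x α β i j) ≤ ENNReal.ofReal ((β - α) / t) := by
  obtain ⟨p, rfl⟩ := hi
  have := lw_single_gen P U a b t x α β ht hU hlaw hind (false, [r]) 1 one_ne_zero (p ++ [r]) j
    (fun ω => by simpa using lw_X_f a b U x p [] j r ω)
  simpa using this

lemma lw_pair_f (a b t x α β : ℝ) (ha : 0 < a) (ht : 0 < t)
    (hU : ∀ p, Measurable (U p))
    (hlaw : ∀ p, P.map (U p) = (ENNReal.ofReal t)⁻¹ • volume.restrict (Set.Icc 0 t))
    (hind : iIndepFun U P) (i i' j j' : LarssonWord) (c : Fin 2) (s : LarssonWord)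
    (hi' : c :: s <:+ i') (hi : ¬ c :: s <:+ i) :
    P (lwE a b U x α β i j ∩ lwE a b U x α β i' j') ≤
      ENNReal.ofReal ((β - α) / a ^ s.length / t) * P (lwE a b U x α β i j) := by
  obtain ⟨p, rfl⟩ := hi'
  have := lw_pair_gen P U a b t x α β ht hU hlaw hind (false, c :: s) (a ^ s.length)
    (by positivity) i j (p ++ c :: s) j' (lw_X_f_not a b U x _ i j hi) (lw_X_f a b U x p s j' c)
  rwa [abs_of_pos (by positivity)] at this

lemma lw_pair_t (a b t x α β : ℝ) (ha : 0 < a) (ht : 0 < t)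
    (hU : ∀ p, Measurable (U p))
    (hlaw : ∀ p, P.map (U p) = (ENNReal.ofReal t)⁻¹ • volume.restrict (Set.Icc 0 t))
    (hind : iIndepFun U P) (i i' j j' : LarssonWord) (c : Fin 2) (s : LarssonWord)
    (hj' : c :: s <:+ j') (hj : ¬ c :: s <:+ j) :
    P (lwE a b U x α β i j ∩ lwE a b U x α β i' j') ≤
      ENNReal.ofReal ((β - α) / a ^ s.length / t) * P (lwE a b U x α β i j) := by
  obtain ⟨p, rfl⟩ := hj'
  have := lw_pair_gen P U a b t x α β ht hU hlaw hind (true, c :: s) (-a ^ s.length)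
    (by have : 0 < a ^ s.length := by positivity
        exact (neg_neg_of_pos this).ne) i j i' (p ++ c :: s)
    (lw_X_t_not a b U x _ i j hj) (lw_X_t a b U x p s i' c)
  rwa [abs_neg, abs_of_pos (by positivity)] at this

/-- lower bound for one pair -/
lemma lw_pair_lower (a b t x l K : ℝ) (ha : 0 < a) (ha1 : a < 1 / 3) (hb : 0 < b) (ht : 0 < t)
    (htt : t = (1 - 3 * a - 2 * b) / 2) (hK : K = t / 16) (hl : l ∈ Set.Icc (-K) 0)
    (hx : x ∈ Set.Icc (-K) K) (n : ℕ)
    (hU : ∀ p, Measurable (U p))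
    (hlaw : ∀ p, P.map (U p) = (ENNReal.ofReal t)⁻¹ • volume.restrict (Set.Icc 0 t))
    (hind : iIndepFun U P) (r : Fin 2) (p w w' : LarssonWord) (hw : w.length = w'.length)
    (hm : a ^ (p.length + 1) * (3 / 2) ≤ t / 8) :
    ENNReal.ofReal (3 / 256 * a ^ n) ≤
      P (lwE a b U x (a ^ n * l) (a ^ n * (l + K)) (w ++ (p ++ [r])) (w' ++ (p ++ [r]))) := by
  set i := w ++ (p ++ [r]) with hi
  set j := w' ++ (p ++ [r]) with hj
  set q1 : Bool × LarssonWord := (false, [r]) with hq1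
  set q2 : Bool × LarssonWord := (true, [r]) with hq2
  -- almost sure bounds
  have hae : ∀ᵐ ω ∂P, ∀ p, U p ω ∈ Set.Icc 0 t := by
    rw [ae_all_iff]
    intro p
    have h : ∀ᵐ y ∂(P.map (U p)), y ∈ Set.Icc 0 t := by
      rw [hlaw p]
      exact Measure.ae_smul_measure (ae_restrict_mem measurableSet_Icc) _
    exact ae_of_ae_map (hU p).aemeasurable h
  set R : Ω → ℝ := lwX a b (lwZero (lwZero U q1) q2) x i j with hR
  set Y : Ω → ℝ := lwX a b (lwZero U q1) x i j with hY
  have hz1 : ∀ p, Measurable[lwSig U {q1}ᶜ] (lwZero U q1 p) :=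
    lw_zero_meas U q1 _ (fun p hp => Or.inl hp)
  have hYm : Measurable[lwSig U {q1}ᶜ] Y := lw_X_meas _ a b _ hz1 x i j
  have hz2 : ∀ p, Measurable[lwSig U {q2}ᶜ] (lwZero (lwZero U q1) q2 p) := by
    intro p
    by_cases h2 : p = q2
    · unfold lwZero; simp only [h2, if_true]; exact measurable_const
    · by_cases h1 : p = q1
      · unfold lwZero; simp only [h1, if_true, ite_self]; exact measurable_const
      · unfold lwZero; simp only [h1, h2, if_false]; exact lw_sig_meas U _ p h2
  have hRm : Measurable[lwSig U {q2}ᶜ] R := lw_X_meas _ a b _ hz2 x i j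
  have hRm' : Measurable R := hRm.mono (lw_sig_le U hU _) le_rfl
  have hYm' : Measurable Y := hYm.mono (lw_sig_le U hU _) le_rfl
  have eX : ∀ ω, lwX a b U x i j ω = Y ω + U q1 ω := by
    intro ω
    have := lw_X_f a b U x (w ++ p) [] j r ω
    simpa [hi] using this
  have eY : ∀ ω, Y ω = R ω - U q2 ω := by
    intro ω
    have := lw_X_t a b (lwZero U q1) x (w' ++ p) [] i r ω
    have e : lwZero U q1 q2 ω = U q2 ω := by simp [lwZero, hq1, hq2]
    rw [← hq2, e] at this
    simp only [List.length_nil, pow_zero, neg_mul, one_mul, List.append_assoc] at this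
    rw [hY, hR, hj, this]; ring
  have hRb : ∀ᵐ ω ∂P, |R ω| ≤ 11 * t / 16 := by
    filter_upwards [hae] with ω hω
    set u : LarssonWord → ℝ := fun s => lwZero (lwZero U q1) q2 (false, s) ω with hu
    set u' : LarssonWord → ℝ := fun s => lwZero (lwZero U q1) q2 (true, s) ω with hu'
    have hb0 : ∀ p, lwZero (lwZero U q1) q2 p ω ∈ Set.Icc 0 t := by
      intro p
      simp only [lwZero]
      split_ifs
      · exact ⟨le_rfl, ht.le⟩
      · exact ⟨le_rfl, ht.le⟩
      · exact hω p
    have b2 := lw_bound2 a b t ha (by linarith) hb htt u u' (fun s => hb0 _) (fun s => hb0 _)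
      (p ++ [r]) w w' hw
    have b1 := lw_bound1 a b t ha (by linarith) u u' (fun s => hb0 _) (fun s => hb0 _) r
      (by simp [hu, lwZero, hq1]) (by simp [hu', lwZero, hq2]) p
    have c1 : t * (a - a ^ (p.length + 1)) / (1 - a) ≤ t / 2 := by
      rw [div_le_iff₀ (by linarith)]
      have : 0 < a ^ (p.length + 1) := by positivity
      nlinarith
    have c2 : a ^ (p ++ [r]).length * (1 - a ^ w.length) / (1 - a) ≤ t / 8 := by
      refine le_trans ?_ hm
      simp only [List.length_append, List.length_cons, List.length_nil, zero_add]
      rw [div_le_iff₀ (by linarith), mul_assoc]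
      have : 0 < a ^ w.length := by positivity
      gcongr
      linarith
    have c3 : |R ω| ≤ |larssonLeft a b u i - larssonLeft a b u' j| + |x| := abs_add_le _ _
    have c4 : |x| ≤ t / 16 := by rw [abs_le, ← hK]; exact hx
    linarith
  have s1 : ENNReal.ofReal (3 / 16) ≤ P {ω | Y ω ∈ Set.Icc (-(t - K)) (-K)} := by
    have := lw_lower P R (U q2) hRm' (hU q2) (lw_indepFun P U hU hind q2 R hRm)
      {z | z.1 - z.2 ∈ Set.Icc (-(t - K)) (-K)}
      ((measurable_fst.sub measurable_snd) measurableSet_Icc)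
      {y | |y| ≤ 11 * t / 16} (measurableSet_le measurable_abs measurable_const)
      (ENNReal.ofReal (3 / 16))
      (by
        intro y hy
        simp only [Set.mem_ofPred_eq] at hy
        rw [hlaw q2]
        refine le_trans (ENNReal.ofReal_le_ofReal ?_) (lw_law_ge t ht _ (max y 0 + K)
          (t - K + min y 0) ?_ ?_ ?_)
        · rw [le_div_iff₀ ht]
          rcases le_total y 0 with h | h
          · rw [max_eq_right h, min_eq_left h]; rw [abs_of_nonpos h] at hy; linarith
          · rw [max_eq_left h, min_eq_right h]; rw [abs_of_nonneg h] at hy; linarith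
        · have := le_max_right y 0; linarith
        · have := min_le_right y 0; linarith
        · intro u hu
          simp only [Set.mem_Icc] at hu
          have := le_max_left y 0
          have := min_le_left y 0
          simp only [Set.mem_preimage, Set.mem_ofPred_eq, Set.mem_Icc]
          constructor <;> linarith)
    have e1 : P {ω | R ω ∈ {y : ℝ | |y| ≤ 11 * t / 16}} = 1 := by
      exact (mem_ae_iff_prob_eq_one
        (hRm' (measurableSet_le measurable_abs measurable_const))).1 hRb
    rw [e1, mul_one] at this
    refine this.trans (le_of_eq ?_)
    congr 1; ext ω; simp only [Set.mem_ofPred_eq, eY]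
  have hn1 : a ^ n ≤ 1 := pow_le_one₀ ha.le (by linarith)
  have hn0 : 0 < a ^ n := by positivity
  have s2 := lw_lower P Y (U q1) hYm' (hU q1) (lw_indepFun P U hU hind q1 Y hYm)
      {z | z.1 + z.2 ∈ Set.Icc (a ^ n * l) (a ^ n * (l + K))}
      ((measurable_fst.add measurable_snd) measurableSet_Icc)
      (Set.Icc (-(t - K)) (-K)) measurableSet_Icc
      (ENNReal.ofReal (1 / 16 * a ^ n))
      (by
        intro y hy
        simp only [Set.mem_Icc] at hy hl
        rw [hlaw q1]
        have k1 : -K ≤ a ^ n * l := by nlinarith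
        have k2 : a ^ n * (l + K) ≤ K := by nlinarith
        refine le_trans (ENNReal.ofReal_le_ofReal ?_) (lw_law_ge t ht _ (a ^ n * l - y)
          (a ^ n * (l + K) - y) ?_ ?_ ?_)
        · rw [le_div_iff₀ ht, hK]; apply le_of_eq; ring
        · linarith
        · linarith
        · intro u hu
          simp only [Set.mem_Icc] at hu
          simp only [Set.mem_preimage, Set.mem_ofPred_eq, Set.mem_Icc]
          constructor <;> linarith)
  calc ENNReal.ofReal (3 / 256 * a ^ n) =
        ENNReal.ofReal (1 / 16 * a ^ n) * ENNReal.ofReal (3 / 16) := by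
        rw [← ENNReal.ofReal_mul (by positivity)]; congr 1; ring
    _ ≤ ENNReal.ofReal (1 / 16 * a ^ n) * P {ω | Y ω ∈ Set.Icc (-(t - K)) (-K)} := by gcongr
    _ ≤ _ := s2
    _ = _ := by congr 1; ext ω; simp only [lwE, Set.mem_ofPred_eq, eX]

end

/-- agreement indicator of two words after dropping the first `e` letters -/
def lwF (e : ℕ) (i i' : LarssonWord) : ℝ := if i.drop e = i'.drop e then 1 else 0

lemma lw_F_nonneg (e : ℕ) (i i' : LarssonWord) : 0 ≤ lwF e i i' := by
  unfold lwF; split_ifs <;> norm_num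

lemma lw_drop_diverge (i i' : LarssonWord) (n d : ℕ) (hi : i.length = n) (hi' : i'.length = n)
    (hd : d + 1 < n) (h : i.drop d ≠ i'.drop d) :
    ∃ (c : Fin 2) (s : LarssonWord), c :: s <:+ i' ∧ ¬ c :: s <:+ i ∧ s.length + (d + 1) = n := by
  have hlt : d < i'.length := by omega
  refine ⟨i'[d], i'.drop (d + 1), ?_, ?_, ?_⟩
  · rw [← List.drop_eq_getElem_cons hlt]; exact List.drop_suffix _ _
  · rw [← List.drop_eq_getElem_cons hlt]
    intro hs
    have := List.suffix_iff_eq_drop.1 hs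
    apply h
    rw [this]
    congr 1
    simp; omega
  · simp; omega

section
variable {Ω : Type*} [MeasurableSpace Ω] (P : Measure Ω) [IsProbabilityMeasure P]
    (U : Bool × LarssonWord → Ω → ℝ)

lemma lw_pair_sum (a b t x α β K : ℝ) (ha : 0 < a) (ht : 0 < t) (hKt : K ≤ t) (n : ℕ)
    (hαβ : β - α = a ^ n * K)
    (hU : ∀ p, Measurable (U p))
    (hlaw : ∀ p, P.map (U p) = (ENNReal.ofReal t)⁻¹ • volume.restrict (Set.Icc 0 t))
    (hind : iIndepFun U P) (i i' j j' : LarssonWord) (r : Fin 2) (hr : [r] <:+ i)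
    (hi : i.length = n) (hi' : i'.length = n) (hj : j.length = n) (hj' : j'.length = n)
    (d : ℕ) (hd : d < n) (h1 : i.drop d = i'.drop d) (h2 : j.drop d = j'.drop d) :
    P.real (lwE a b U x α β i j ∩ lwE a b U x α β i' j') ≤
      a ^ n * ∑ e ∈ Finset.range (d + 1), a ^ e * (lwF e i i' * lwF e j j') := by
  have hn0 : 0 < a ^ n := by positivity
  have hS : P (lwE a b U x α β i j) ≤ ENNReal.ofReal (a ^ n) := by
    refine (lw_single P U a b t x α β ht hU hlaw hind i j r hr).trans
      (ENNReal.ofReal_le_ofReal ?_)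
    rw [hαβ, div_le_iff₀ ht]; gcongr
  induction d with
  | zero =>
    simp only [List.drop_zero] at h1 h2
    subst h1 h2
    refine ENNReal.toReal_le_of_le_ofReal (by simp [lwF, hn0.le]) ?_
    simpa [lwF] using hS
  | succ d ih =>
    have hnn : ∀ e, 0 ≤ a ^ e * (lwF e i i' * lwF e j j') := fun e =>
      mul_nonneg (by positivity) (mul_nonneg (lw_F_nonneg _ _ _) (lw_F_nonneg _ _ _))
    rw [Finset.sum_range_succ]
    by_cases h : i.drop d = i'.drop d ∧ j.drop d = j'.drop d
    · refine (ih (by omega) h.1 h.2).trans ?_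
      gcongr
      linarith [hnn (d + 1)]
    · have key : P (lwE a b U x α β i j ∩ lwE a b U x α β i' j') ≤
          ENNReal.ofReal (a ^ n * a ^ (d + 1)) := by
        have fin : ∀ s : LarssonWord, s.length + (d + 1) = n →
            ENNReal.ofReal ((β - α) / a ^ s.length / t) * P (lwE a b U x α β i j) ≤
            ENNReal.ofReal (a ^ n * a ^ (d + 1)) := by
          intro s hs
          calc _ ≤ ENNReal.ofReal (a ^ (d + 1)) * ENNReal.ofReal (a ^ n) := by
                gcongr
                rw [hαβ, div_le_iff₀ ht, div_le_iff₀ (by positivity), ← hs, pow_add]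
                have : 0 < a ^ s.length * a ^ (d + 1) := by positivity
                nlinarith
            _ = _ := by rw [← ENNReal.ofReal_mul (by positivity), mul_comm]
        by_cases h3 : i.drop d = i'.drop d
        · have h4 : j.drop d ≠ j'.drop d := fun h4 => h ⟨h3, h4⟩
          obtain ⟨c, s, hs1, hs2, hs3⟩ := lw_drop_diverge j j' n d hj hj' hd h4
          exact (lw_pair_t P U a b t x α β ha ht hU hlaw hind i i' j j' c s hs1 hs2).trans
            (fin s hs3)
        · obtain ⟨c, s, hs1, hs2, hs3⟩ := lw_drop_diverge i i' n d hi hi' hd h3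
          exact (lw_pair_f P U a b t x α β ha ht hU hlaw hind i i' j j' c s hs1 hs2).trans
            (fin s hs3)
      have hF : lwF (d + 1) i i' * lwF (d + 1) j j' = 1 := by simp [lwF, h1, h2]
      refine (ENNReal.toReal_le_of_le_ofReal (by positivity) key).trans ?_
      gcongr
      rw [hF, mul_one]
      linarith [Finset.sum_nonneg (fun e (_ : e ∈ Finset.range (d + 1)) => hnn e)]

lemma lw_count (N e : ℕ) (he : e ≤ N) (v i : LarssonWord) :
    ∑ z : List.Vector (Fin 2) N, lwF e i (z.1 ++ v) ≤ 2 ^ e := by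
  classical
  unfold lwF
  rw [Finset.sum_boole]
  have : (Finset.univ.filter fun z : List.Vector (Fin 2) N => i.drop e = (z.1 ++ v).drop e).card ≤
      (Finset.univ : Finset (List.Vector (Fin 2) e)).card := by
    apply Finset.card_le_card_of_injOn
      (fun z => ⟨z.1.take e, by simp [z.2, he]⟩) (fun _ _ => Finset.mem_univ _)
    intro z hz z' hz' h
    simp only [Finset.coe_filter, Finset.mem_univ, true_and, Set.mem_ofPred_eq] at hz hz'
    have h1 : z.1.take e = z'.1.take e := congrArg Subtype.val h
    have h2 : z.1.drop e = z'.1.drop e := by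
      have := hz.symm.trans hz'
      rw [List.drop_append_of_le_length (by rw [z.2]; exact he),
        List.drop_append_of_le_length (by rw [z'.2]; exact he)] at this
      exact List.append_cancel_right this
    apply Subtype.ext
    rw [← List.take_append_drop e z.1, ← List.take_append_drop e z'.1, h1, h2]
  rw [Finset.card_univ, card_vector, Fintype.card_fin] at this
  exact_mod_cast this

lemma lw_second (a b t x α β K : ℝ) (ha : 1 / 4 < a) (ha1 : a < 1)
    (ht : 0 < t) (hKt : K ≤ t) (N : ℕ)
    (hU : ∀ p, Measurable (U p))
    (hlaw : ∀ p, P.map (U p) = (ENNReal.ofReal t)⁻¹ • volume.restrict (Set.Icc 0 t))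
    (hind : iIndepFun U P) (p : LarssonWord) (r : Fin 2)
    (hαβ : β - α = a ^ (N + (p ++ [r]).length) * K) :
    ∑ z : List.Vector (Fin 2) N × List.Vector (Fin 2) N,
      ∑ z' : List.Vector (Fin 2) N × List.Vector (Fin 2) N,
      P.real (lwE a b U x α β (z.1.1 ++ (p ++ [r])) (z.2.1 ++ (p ++ [r])) ∩
        lwE a b U x α β (z'.1.1 ++ (p ++ [r])) (z'.2.1 ++ (p ++ [r]))) ≤
      (4 * a / (4 * a - 1)) * ((4 * a) ^ N) ^ 2 := by
  set v := p ++ [r] with hv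
  set n := N + v.length with hn
  have hvl : 0 < v.length := by simp [hv]
  have hlen : ∀ z : List.Vector (Fin 2) N, (z.1 ++ v).length = n := by
    intro z; simp [hn, z.2]
  have hdrop : ∀ z : List.Vector (Fin 2) N, (z.1 ++ v).drop N = v := by
    intro z; rw [List.drop_append_of_le_length (by rw [z.2])]; simp [z.2]
  have ha0 : 0 < a := by linarith
  have hinner : ∀ z : List.Vector (Fin 2) N × List.Vector (Fin 2) N,
      ∑ z' : List.Vector (Fin 2) N × List.Vector (Fin 2) N,
      P.real (lwE a b U x α β (z.1.1 ++ v) (z.2.1 ++ v) ∩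
        lwE a b U x α β (z'.1.1 ++ v) (z'.2.1 ++ v)) ≤
      a ^ N * ((4 * a) * (4 * a) ^ N / (4 * a - 1)) := by
    intro z
    calc _ ≤ ∑ z' : List.Vector (Fin 2) N × List.Vector (Fin 2) N,
          a ^ n * ∑ e ∈ Finset.range (N + 1), a ^ e *
            (lwF e (z.1.1 ++ v) (z'.1.1 ++ v) * lwF e (z.2.1 ++ v) (z'.2.1 ++ v)) := by
          refine Finset.sum_le_sum fun z' _ => ?_
          exact lw_pair_sum P U a b t x α β K ha0 ht hKt n hαβ hU hlaw hind _ _ _ _ r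
            ⟨z.1.1 ++ p, by simp [hv]⟩ (hlen _) (hlen _) (hlen _) (hlen _) N (by omega)
            (by rw [hdrop, hdrop]) (by rw [hdrop, hdrop])
      _ = a ^ n * ∑ e ∈ Finset.range (N + 1), a ^ e *
            ((∑ y : List.Vector (Fin 2) N, lwF e (z.1.1 ++ v) (y.1 ++ v)) *
             (∑ y : List.Vector (Fin 2) N, lwF e (z.2.1 ++ v) (y.1 ++ v))) := by
          rw [← Finset.mul_sum, Finset.sum_comm]
          congr 1
          refine Finset.sum_congr rfl fun e _ => ?_
          rw [← Finset.mul_sum, Finset.sum_mul_sum, Fintype.sum_prod_type]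
      _ ≤ a ^ N * ∑ e ∈ Finset.range (N + 1), a ^ e * ((2 : ℝ) ^ e * 2 ^ e) := by
          have hnN : a ^ n ≤ a ^ N := pow_le_pow_of_le_one ha0.le ha1.le (by omega)
          have hnn : ∀ e (i : LarssonWord),
              0 ≤ ∑ y : List.Vector (Fin 2) N, lwF e i (y.1 ++ v) :=
            fun e i => Finset.sum_nonneg fun _ _ => lw_F_nonneg _ _ _
          refine mul_le_mul hnN ?_ ?_ (by positivity)
          · refine Finset.sum_le_sum fun e he => ?_
            have he' : e ≤ N := by simpa [Nat.lt_succ_iff] using he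
            gcongr
            · exact hnn _ _
            · exact lw_count N e he' v _
            · exact lw_count N e he' v _
          · exact Finset.sum_nonneg fun e _ =>
              mul_nonneg (by positivity) (mul_nonneg (hnn _ _) (hnn _ _))
      _ = a ^ N * ∑ e ∈ Finset.range (N + 1), (4 * a) ^ e := by
          congr 1
          refine Finset.sum_congr rfl fun e _ => ?_
          rw [← mul_pow, ← mul_pow]; congr 1; ring
      _ ≤ _ := by
          gcongr
          rw [geom_sum_eq (by linarith)]
          have : 0 < 4 * a - 1 := by linarith
          gcongr
          rw [pow_succ]; linarith
  refine (Finset.sum_le_sum fun z _ => hinner z).trans (le_of_eq ?_)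
  rw [Finset.sum_const, Finset.card_univ, Fintype.card_prod, card_vector, Fintype.card_fin,
    nsmul_eq_mul]
  push_cast
  have : 4 * a - 1 ≠ 0 := by linarith
  rw [mul_pow 4 a]
  have e4 : (4 : ℝ) ^ N = 2 ^ N * 2 ^ N := by rw [← mul_pow]; norm_num
  rw [e4]
  field_simp

lemma lw_E_meas (a b x α β : ℝ) (r : Fin 2) (l l' : LarssonWord) :
    MeasurableSet[lwSig U {q | [r] <:+ q.2}] (lwE a b U x α β (l ++ [r]) (l' ++ [r])) := by
  classical
  set W : Bool × LarssonWord → Ω → ℝ := fun q ω => if [r] <:+ q.2 then U q ω else 0 with hW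
  have hWm : ∀ q, Measurable[lwSig U {q | [r] <:+ q.2}] (W q) := by
    intro q
    by_cases h : [r] <:+ q.2
    · simp only [hW, h, if_true]; exact lw_sig_meas U _ q h
    · simp only [hW, h, if_false]; exact measurable_const
  have hsuf : ∀ (l s : LarssonWord), s ≠ [] → s <:+ l ++ [r] → [r] <:+ s := by
    intro l s hs h
    exact List.suffix_of_suffix_length_le (List.suffix_append l [r]) h
      (List.length_pos_iff.2 hs)
  have e : lwX a b U x (l ++ [r]) (l' ++ [r]) = lwX a b W x (l ++ [r]) (l' ++ [r]) := by
    funext ω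
    unfold lwX
    rw [lw_left_congr a b (fun w => U (false, w) ω) (fun w => W (false, w) ω) (l ++ [r])
      (fun s h1 h2 => by simp [hW, hsuf l s h1 h2]),
      lw_left_congr a b (fun w => U (true, w) ω) (fun w => W (true, w) ω) (l' ++ [r])
      (fun s h1 h2 => by simp [hW, hsuf l' s h1 h2])]
  unfold lwE
  rw [e]
  exact lw_X_meas _ a b W hWm x _ _ measurableSet_Icc

/-- the event that many squares below the diagonal square of `r` meet the window -/
def lwG (a b x α β : ℝ) (N : ℕ) (v : LarssonWord) (θ : ℝ) : Set Ω :=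
  {ω | θ < ∑ z : List.Vector (Fin 2) N × List.Vector (Fin 2) N,
    (lwE a b U x α β (z.1.1 ++ v) (z.2.1 ++ v)).indicator (fun _ => (1 : ℝ)) ω}

lemma lw_G_meas (a b x α β : ℝ) (N : ℕ) (p : LarssonWord) (r : Fin 2) (θ : ℝ) :
    MeasurableSet[lwSig U {q | [r] <:+ q.2}] (lwG U a b x α β N (p ++ [r]) θ) := by
  unfold lwG
  suffices hs : Measurable[lwSig U {q | [r] <:+ q.2}] (fun ω =>
      ∑ z : List.Vector (Fin 2) N × List.Vector (Fin 2) N,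
      (lwE a b U x α β (z.1.1 ++ (p ++ [r])) (z.2.1 ++ (p ++ [r]))).indicator
        (fun _ => (1 : ℝ)) ω) from hs measurableSet_Ioi
  apply Finset.measurable_sum
  intro z _
  have := lw_E_meas U a b x α β r (z.1.1 ++ p) (z.2.1 ++ p)
  rw [List.append_assoc, List.append_assoc] at this
  exact measurable_const.indicator this

lemma lw_G_prob (a b t x l K : ℝ) (ha : 1 / 4 < a) (ha1 : a < 1 / 3) (hb : 0 < b) (ht : 0 < t)
    (htt : t = (1 - 3 * a - 2 * b) / 2) (hK : K = t / 16) (hl : l ∈ Set.Icc (-K) 0)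
    (hx : x ∈ Set.Icc (-K) K) (N : ℕ)
    (hU : ∀ p, Measurable (U p))
    (hlaw : ∀ p, P.map (U p) = (ENNReal.ofReal t)⁻¹ • volume.restrict (Set.Icc 0 t))
    (hind : iIndepFun U P) (r : Fin 2) (p : LarssonWord)
    (hm : a ^ (p.length + 1) * (3 / 2) ≤ t / 8) :
    (3 / 256 * a ^ (p.length + 1)) ^ 2 / (4 * (4 * a / (4 * a - 1))) ≤
      P.real (lwG U a b x (a ^ (N + (p.length + 1)) * l) (a ^ (N + (p.length + 1)) * (l + K)) N
        (p ++ [r]) (3 / 256 * a ^ (p.length + 1) * (4 * a) ^ N / 2)) := by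
  have ha0 : 0 < a := by linarith
  have ha4 : 0 < 4 * a - 1 := by linarith
  refine lw_pz P _ (fun z => ?_) _ _ _ (by positivity) (by positivity) (by positivity) ?_ ?_
  · exact lw_X_meas _ a b U hU x _ _ measurableSet_Icc
  · calc _ = ∑ z : List.Vector (Fin 2) N × List.Vector (Fin 2) N,
          (3 / 256 * a ^ (N + (p.length + 1))) := by
          rw [Finset.sum_const, Finset.card_univ, Fintype.card_prod, card_vector, Fintype.card_fin,
            nsmul_eq_mul]
          push_cast
          have e4 : (4 : ℝ) ^ N = 2 ^ N * 2 ^ N := by rw [← mul_pow]; norm_num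
          rw [mul_pow, e4, pow_add]; ring
      _ ≤ _ := by
          refine Finset.sum_le_sum fun z _ => ?_
          have := lw_pair_lower P U a b t x l K ha0 ha1 hb ht htt hK hl hx (N + (p.length + 1))
            hU hlaw hind r p z.1.1 z.2.1 (by rw [z.1.2, z.2.2]) hm
          exact (ENNReal.ofReal_le_iff_le_toReal (measure_ne_top _ _)).1 this
  · refine lw_second P U a b t x _ _ K ha (by linarith) ht (by linarith) N
      hU hlaw hind p r ?_
    simp only [List.length_append, List.length_cons, List.length_nil, zero_add]
    ring

lemma lw_G_le (a b x l K : ℝ) (ha : 0 < a) (N : ℕ) (v : LarssonWord) (θ : ℝ) (ω : Ω)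
    (h : ω ∈ lwG U a b x (a ^ (N + v.length) * l) (a ^ (N + v.length) * (l + K)) N v θ) :
    θ < (larssonZ a b (fun w => U (false, w) ω) (fun w => U (true, w) ω) (N + v.length) x
      (Set.Icc l (l + K)) : ℝ) := by
  classical
  refine lt_of_lt_of_le h ?_
  simp only [Set.indicator_apply]
  rw [Finset.sum_boole]
  norm_cast
  unfold larssonZ
  have hfin : Finite {q : LarssonWord × LarssonWord //
      q.1.length = N + v.length ∧ q.2.length = N + v.length ∧
      (larssonLeft a b (fun w => U (false, w) ω) q.1 -
        larssonLeft a b (fun w => U (true, w) ω) q.2 + x) / a ^ (N + v.length) ∈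
          Set.Icc l (l + K)} := by
    have hf := (List.finite_length_eq (Fin 2) (N + v.length))
    refine ((hf.prod hf).subset ?_).to_subtype
    intro q hq
    exact ⟨hq.1, hq.2.1⟩
  rw [← Fintype.card_coe, ← Nat.card_eq_fintype_card]
  have hpos : 0 < a ^ (N + v.length) := by positivity
  refine Nat.card_le_card_of_injective (fun z => ⟨(z.1.1.1 ++ v, z.1.2.1 ++ v), ?_, ?_, ?_⟩) ?_
  · simp [z.1.1.2]
  · simp [z.1.2.2]
  · have hz := (Finset.mem_filter.1 z.2).2
    simp only [lwE, lwX, Set.mem_ofPred_eq, Set.mem_Icc] at hz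
    rw [Set.mem_Icc, le_div_iff₀ hpos, div_le_iff₀ hpos]
    constructor <;> linarith [hz.1, hz.2]
  · intro z z' hzz
    have h1 := congrArg Subtype.val hzz
    simp only [Prod.mk.injEq, List.append_cancel_right_eq] at h1
    apply Subtype.ext
    exact Prod.ext (Subtype.ext h1.1) (Subtype.ext h1.2)

end

/-- (Main Lemma)  There exist `ρ > 1`, positive `δ, q, K` and `N ∈ ℕ` such that for every
`n ≥ N` and every `x ∈ [−K, K]`, with probability at least `q` both
`Z_n^x([−K,0]) > δ·ρ^n` and `Z_n^x([0,K]) > δ·ρ^n`. -/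
theorem larsson_main_lemma
    (a b : ℝ) (ha : 1 / 4 < a) (hb : 0 < b) (hab : 3 * a + 2 * b < 1)
    {Ω : Type*} [MeasurableSpace Ω] (P : Measure Ω) [IsProbabilityMeasure P]
    (U : Bool × LarssonWord → Ω → ℝ)
    (hUmeas : ∀ p, Measurable (U p))
    (hUlaw : ∀ p, P.map (U p) =
      (ENNReal.ofReal ((1 - 3 * a - 2 * b) / 2))⁻¹ •
        volume.restrict (Set.Icc 0 ((1 - 3 * a - 2 * b) / 2)))
    (hUindep : iIndepFun U P) :
    ∃ ρ : ℝ, 1 < ρ ∧ ∃ δ > (0 : ℝ), ∃ q > (0 : ℝ), ∃ K > (0 : ℝ), ∃ N : ℕ,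
      ∀ n ≥ N, ∀ x ∈ Set.Icc (-K) K,
        ENNReal.ofReal q ≤
          P {ω | δ * ρ ^ n <
                  (larssonZ a b (fun w => U (false, w) ω) (fun w => U (true, w) ω) n x
                    (Set.Icc (-K) 0) : ℝ) ∧
                 δ * ρ ^ n <
                  (larssonZ a b (fun w => U (false, w) ω) (fun w => U (true, w) ω) n x
                    (Set.Icc 0 K) : ℝ)} := by
  set t : ℝ := (1 - 3 * a - 2 * b) / 2 with htt
  have ht : 0 < t := by rw [htt]; linarith
  have ha0 : 0 < a := by linarith
  have ha1 : a < 1 / 3 := by linarith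
  have ha4 : 0 < 4 * a - 1 := by linarith
  obtain ⟨k, hk⟩ := exists_pow_lt_of_lt_one (show (0 : ℝ) < t / 12 by positivity)
    (show a < 1 by linarith)
  set p : LarssonWord := List.replicate k 0 with hp
  have hpl : p.length = k := by simp [hp]
  have hm : a ^ (p.length + 1) * (3 / 2) ≤ t / 8 := by
    have : a ^ (p.length + 1) ≤ a ^ k :=
      pow_le_pow_of_le_one ha0.le (by linarith) (by omega)
    linarith
  set m := p.length + 1 with hmdef
  set q0 : ℝ := (3 / 256 * a ^ m) ^ 2 / (4 * (4 * a / (4 * a - 1))) with hq0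
  have hq0pos : 0 < q0 := by positivity
  have h4a : 0 < (4 * a) ^ m := by positivity
  refine ⟨4 * a, by linarith, 3 / 256 * a ^ m / (2 * (4 * a) ^ m), by positivity, q0 * q0,
    by positivity, t / 16, by positivity, m, ?_⟩
  intro n hn x hx
  obtain ⟨N, rfl⟩ : ∃ N, n = N + m := ⟨n - m, by omega⟩
  have hθ : 3 / 256 * a ^ m / (2 * (4 * a) ^ m) * (4 * a) ^ (N + m) =
      3 / 256 * a ^ m * (4 * a) ^ N / 2 := by
    field_simp; ring
  rw [hθ]
  set θ := 3 / 256 * a ^ m * (4 * a) ^ N / 2 with hθd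
  have g0 := lw_G_prob P U a b t x (-(t / 16)) (t / 16) ha ha1 hb ht htt rfl
    ⟨le_rfl, by linarith⟩ hx N hUmeas hUlaw hUindep 0 p hm
  have g1 := lw_G_prob P U a b t x 0 (t / 16) ha ha1 hb ht htt rfl
    ⟨by linarith, le_rfl⟩ hx N hUmeas hUlaw hUindep 1 p hm
  rw [← hmdef, ← hq0, ← hθd] at g0 g1
  set G0 := lwG U a b x (a ^ (N + m) * (-(t / 16))) (a ^ (N + m) * (-(t / 16) + t / 16)) N
    (p ++ [0]) θ with hG0
  set G1 := lwG U a b x (a ^ (N + m) * 0) (a ^ (N + m) * (0 + t / 16)) N (p ++ [1]) θ with hG1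
  have hdisj : Disjoint {q : Bool × LarssonWord | [(0 : Fin 2)] <:+ q.2}
      {q : Bool × LarssonWord | [(1 : Fin 2)] <:+ q.2} := by
    rw [Set.disjoint_left]
    intro q h0 h1
    have := (List.suffix_of_suffix_length_le h0 h1 (by simp)).eq_of_length (by simp)
    simp at this
  have hI := lw_sig_indep P U hUmeas hUindep _ _ hdisj
  have hprod : P (G0 ∩ G1) = P G0 * P G1 :=
    (Indep_iff _ _ P).1 hI G0 G1 (lw_G_meas U a b x _ _ N p 0 θ) (lw_G_meas U a b x _ _ N p 1 θ)
  calc ENNReal.ofReal (q0 * q0) = ENNReal.ofReal q0 * ENNReal.ofReal q0 :=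
        ENNReal.ofReal_mul hq0pos.le
    _ ≤ P G0 * P G1 :=
        mul_le_mul' (ENNReal.ofReal_le_of_le_toReal g0) (ENNReal.ofReal_le_of_le_toReal g1)
    _ = P (G0 ∩ G1) := hprod.symm
    _ ≤ _ := by
        apply measure_mono
        rintro ω ⟨h0, h1⟩
        have l0 : (p ++ [(0 : Fin 2)]).length = m := by simp [hmdef]
        have l1 : (p ++ [(1 : Fin 2)]).length = m := by simp [hmdef]
        have k0 := lw_G_le U a b x (-(t / 16)) (t / 16) ha0 N (p ++ [0]) θ ω (by rw [l0]; exact h0)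
        have k1 := lw_G_le U a b x 0 (t / 16) ha0 N (p ++ [1]) θ ω (by rw [l1]; exact h1)
        rw [l0, neg_add_cancel] at k0
        rw [l1, zero_add] at k1
        exact ⟨k0, k1⟩
end
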